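/- arXiv:math/0701309 — 10 statements merged into one kernel-verified Lean document; each statement's English description precedes it below -/
import Mathlib

section
/- The set of orphans O := {a ∈ A | for all b ∈ A, ε(a·b) = 0} is a differential ideal of (A,d): it is a linear subspace, it is closed under multiplication by arbitrary elements of A, and d(O) ⊆ O. -/
namespace PDCDGA

variable {k : Type} [Field k]

/-- Graded commutativity with Koszul signs, together with the convention that
squares of odd-degree elements vanish (also in characteristic 2). -/
structure GradedComm {A : Type} [Ring A] [Algebra k A] (𝒜 : ℕ → Submodule k A) : Prop where
  mul_comm : ∀ (i j : ℕ) (a b : A), a ∈ 𝒜 i → b ∈ 𝒜 j →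
    a * b = ((-1 : k) ^ (i * j)) • (b * a)
  odd_sq : ∀ i : ℕ, Odd i → ∀ a ∈ 𝒜 i, a * a = 0

/-- A `k`-linear differential of degree `+1` satisfying the graded Leibniz rule. -/
structure IsDifferential {A : Type} [Ring A] [Algebra k A] (𝒜 : ℕ → Submodule k A)
    (d : A →ₗ[k] A) : Prop where
  grade : ∀ i : ℕ, ∀ a ∈ 𝒜 i, d a ∈ 𝒜 (i + 1)
  d_sq : ∀ a : A, d (d a) = 0
  leibniz : ∀ (i : ℕ) (a b : A), a ∈ 𝒜 i →
    d (a * b) = d a * b + ((-1 : k) ^ i) • (a * d b)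

/-- An orientation `ε : A → k`, concentrated in degree `n`, vanishing on boundaries
and inducing an epimorphism `Hⁿ(A) → k`. -/
structure IsOrientation {A : Type} [Ring A] [Algebra k A] (𝒜 : ℕ → Submodule k A)
    (d : A →ₗ[k] A) (n : ℕ) (ε : A →ₗ[k] k) : Prop where
  homog : ∀ i : ℕ, i ≠ n → ∀ a ∈ 𝒜 i, ε a = 0
  eps_d : ∀ a : A, ε (d a) = 0
  exists_cocycle : ∃ μ : A, μ ∈ 𝒜 n ∧ d μ = 0 ∧ ε μ = 1

/-- The orphan ideal `O = {a | ∀ b, ε (a·b) = 0}` (as a `k`-submodule). -/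
def Orphans {A : Type} [Ring A] [Algebra k A] (ε : A →ₗ[k] k) : Submodule k A :=
  ⨅ b : A, LinearMap.ker (ε ∘ₗ LinearMap.mulRight k b)

lemma mem_orphans {A : Type} [Ring A] [Algebra k A] (ε : A →ₗ[k] k) (a : A) :
    a ∈ Orphans ε ↔ ∀ b : A, ε (a * b) = 0 := by
  simp [Orphans]

/-- `H^*(A,d)` is a Poincaré duality algebra in dimension `n` with respect to the
orientation `ε`: every nonzero cohomology class pairs nontrivially with some class
in the complementary degree. -/
def CohomologyPD {A : Type} [Ring A] [Algebra k A] (𝒜 : ℕ → Submodule k A)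
    (d : A →ₗ[k] A) (n : ℕ) (ε : A →ₗ[k] k) : Prop :=
  ∀ (i : ℕ) (a : A), a ∈ 𝒜 i → d a = 0 → a ∉ LinearMap.range d →
    ∃ (j : ℕ) (b : A), i + j = n ∧ b ∈ 𝒜 j ∧ d b = 0 ∧ ε (a * b) ≠ 0

/-- The orphan ideal is `N`-half-acyclic: `Hⁱ(O) = 0` for `n/2 + 1 ≤ i ≤ N`
(the condition `n/2 + 1 ≤ i` is written as `n + 2 ≤ 2 * i`). -/
def OrphansHalfAcyclic {A : Type} [Ring A] [Algebra k A] (𝒜 : ℕ → Submodule k A)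
    (d : A →ₗ[k] A) (n : ℕ) (ε : A →ₗ[k] k) (N : ℕ) : Prop :=
  ∀ i : ℕ, n + 2 ≤ 2 * i → i ≤ N → ∀ a : A, a ∈ Orphans ε → a ∈ 𝒜 i → d a = 0 →
    ∃ b : A, b ∈ Orphans ε ∧ b ∈ 𝒜 (i - 1) ∧ a = d b

/-- A chain map is a quasi-isomorphism: it induces a bijection on cohomology. -/
def IsQuasiIso {A B : Type} [Ring A] [Algebra k A] [Ring B] [Algebra k B]
    (d : A →ₗ[k] A) (D : B →ₗ[k] B) (f : A → B) : Prop :=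
  (∀ a : A, d a = 0 → (∃ b : B, f a = D b) → ∃ a' : A, a = d a') ∧
  (∀ x : B, D x = 0 → ∃ (a : A) (b : B), d a = 0 ∧ x = f a + D b)

/-- Indices of the monomial basis of `Λ(c₁,…,c_l,w₁,…,w_l)`, where `c_i` has degree
`q+1` and `w_i` has degree `q`: exponents of odd-degree generators are at most 1. -/
def MonIdx (q l : ℕ) : Type :=
  {se : (Fin l → ℕ) × (Fin l → ℕ) //
    (Odd (q + 1) → ∀ i, se.1 i ≤ 1) ∧ (Odd q → ∀ i, se.2 i ≤ 1)}

/-- The monomial `c₁^{s₁} ⋯ c_l^{s_l} · w₁^{e₁} ⋯ w_l^{e_l}`. -/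
def monomial {B : Type} [Monoid B] {l : ℕ} (c w : Fin l → B)
    (μ : (Fin l → ℕ) × (Fin l → ℕ)) : B :=
  (((List.finRange l).map fun i => c i ^ μ.1 i).prod) *
    (((List.finRange l).map fun i => w i ^ μ.2 i).prod)

/-!
Since `ε` vanishes outside degree `n`, it kills every product of homogeneous elements whose degrees
do not add up to `n`; hence the homogeneous components of an orphan are orphans, and all closure
properties need only be checked on homogeneous orphans. For these, graded commutativity rewrites
`x * a` as a multiple of `a * x`, and applying `ε` to the Leibniz rule for `d (a * b)` kills both
`ε (d (a * b))` and `ε (a * d b)`, leaving `ε (d a * b) = 0`.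
-/

section Decomposition

variable {ι R A M : Type*} [DecidableEq ι] [Semiring R] [AddCommMonoid A] [Module R A]
  [AddCommMonoid M] [Module R M] (𝒜 : ι → Submodule R A) [DirectSum.Decomposition 𝒜]

lemma map_decompose_of_map_eq_zero {n : ι} {ε : A →ₗ[R] M}
    (hε : ∀ i, i ≠ n → ∀ a ∈ 𝒜 i, ε a = 0) (a : A) :
    ε (DirectSum.decompose 𝒜 a n) = ε a := by
  induction a using DirectSum.Decomposition.inductionOn 𝒜 with
  | zero => simp
  | @homogeneous i a =>
    obtain rfl | hi := eq_or_ne i n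
    · rw [DirectSum.decompose_of_mem_same 𝒜 a.2]
    · rw [DirectSum.decompose_of_mem_ne 𝒜 a.2 hi, map_zero, hε i hi a a.2]
  | add a b iha ihb =>
    rw [DirectSum.decompose_add, DirectSum.add_apply, Submodule.coe_add, map_add, map_add, iha, ihb]

lemma le_of_forall_homogeneous_mem {p q : Submodule R A} (hp : p.IsHomogeneous 𝒜)
    (h : ∀ i, ∀ a ∈ 𝒜 i, a ∈ p → a ∈ q) : p ≤ q := by
  classical
  intro a ha
  rw [← DirectSum.sum_support_decompose 𝒜 a]
  exact q.sum_mem fun i _ ↦ h i _ (SetLike.coe_mem _) (hp i ha)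

lemma map_map_eq_zero_of_degree [Add ι] {n e : ι} {ε : A →ₗ[R] M} {d : A →ₗ[R] A}
    (hε : ∀ i, i ≠ n → ∀ a ∈ 𝒜 i, ε a = 0) (hd : ∀ i, ∀ a ∈ 𝒜 i, d a ∈ 𝒜 (i + e))
    (hεd : ∀ i, i + e = n → ∀ a ∈ 𝒜 i, ε (d a) = 0) (a : A) : ε (d a) = 0 := by
  suffices ε ∘ₗ d = 0 from LinearMap.congr_fun this a
  refine DirectSum.decompose_lhom_ext 𝒜 fun i ↦ LinearMap.ext fun a ↦ ?_
  by_cases hi : i + e = n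
  · exact hεd i hi a a.2
  · exact hε (i + e) hi _ (hd i a a.2)

end Decomposition

section OrphanSubmodule

variable {ι R A M : Type*} [CommSemiring R] [Semiring A] [Algebra R A]
  [AddCommMonoid M] [Module R M]

/-- The orphans of a linear map `ε`, as the left kernel of the pairing `(a, b) ↦ ε (a * b)`. This is
`Orphans` for algebras over a commutative semiring and module-valued `ε`. -/
def orphanSubmodule (ε : A →ₗ[R] M) : Submodule R A :=
  LinearMap.ker ((LinearMap.mul R A).compr₂ ε)

lemma mem_orphanSubmodule {ε : A →ₗ[R] M} {a : A} :
    a ∈ orphanSubmodule ε ↔ ∀ b, ε (a * b) = 0 := by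
  simp [orphanSubmodule, LinearMap.ext_iff]

lemma orphanSubmodule_mul_mem_right {ε : A →ₗ[R] M} {a : A} (ha : a ∈ orphanSubmodule ε) (x : A) :
    a * x ∈ orphanSubmodule ε :=
  mem_orphanSubmodule.2 fun b ↦ by rw [mul_assoc, mem_orphanSubmodule.1 ha]

variable [DecidableEq ι] (𝒜 : ι → Submodule R A)

lemma mem_orphanSubmodule_iff_homogeneous [DirectSum.Decomposition 𝒜] {ε : A →ₗ[R] M} {a : A} :
    a ∈ orphanSubmodule ε ↔ ∀ j, ∀ b ∈ 𝒜 j, ε (a * b) = 0 := by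
  refine ⟨fun ha _ b _ ↦ mem_orphanSubmodule.1 ha b, fun h ↦ ?_⟩
  exact DirectSum.decompose_lhom_ext 𝒜 fun j ↦ LinearMap.ext fun b ↦ h j b b.2

theorem orphanSubmodule_isHomogeneous [AddRightCancelMonoid ι] [GradedRing 𝒜] {n : ι}
    {ε : A →ₗ[R] M} (hε : ∀ i, i ≠ n → ∀ a ∈ 𝒜 i, ε a = 0) :
    (orphanSubmodule ε).IsHomogeneous 𝒜 := by
  intro i a ha
  refine (mem_orphanSubmodule_iff_homogeneous 𝒜).2 fun j b hb ↦ ?_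
  obtain rfl | hij := eq_or_ne (i + j) n
  · rw [← DirectSum.coe_decompose_mul_add_of_right_mem 𝒜 hb, map_decompose_of_map_eq_zero 𝒜 hε,
      mem_orphanSubmodule.1 ha]
  · exact hε (i + j) hij _ (SetLike.mul_mem_graded (SetLike.coe_mem _) hb)

theorem orphanSubmodule_mul_mem_left [DirectSum.Decomposition 𝒜] {ε : A →ₗ[R] M} {χ : ι → ι → R}
    (hO : (orphanSubmodule ε).IsHomogeneous 𝒜)
    (hcomm : ∀ i j a b, a ∈ 𝒜 i → b ∈ 𝒜 j → a * b = χ i j • (b * a))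
    {a : A} (ha : a ∈ orphanSubmodule ε) (x : A) : x * a ∈ orphanSubmodule ε := by
  induction x using DirectSum.Decomposition.inductionOn 𝒜 with
  | zero => simp
  | @homogeneous j x =>
    suffices orphanSubmodule ε ≤ (orphanSubmodule ε).comap (LinearMap.mulLeft R (x : A)) from
      this ha
    refine le_of_forall_homogeneous_mem 𝒜 hO fun i a hai ha ↦ ?_
    rw [Submodule.mem_comap, LinearMap.mulLeft_apply, hcomm j i x a x.2 hai]
    exact Submodule.smul_mem _ _ (orphanSubmodule_mul_mem_right ha x)
  | add x y hx hy => rw [add_mul]; exact add_mem hx hy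

theorem orphanSubmodule_map_mem [DirectSum.Decomposition 𝒜] {ε : A →ₗ[R] M} {d : A →ₗ[R] A}
    {σ : ι → R} (hO : (orphanSubmodule ε).IsHomogeneous 𝒜) (hεd : ∀ a, ε (d a) = 0)
    (hleib : ∀ i a b, a ∈ 𝒜 i → d (a * b) = d a * b + σ i • (a * d b))
    {a : A} (ha : a ∈ orphanSubmodule ε) : d a ∈ orphanSubmodule ε := by
  suffices orphanSubmodule ε ≤ (orphanSubmodule ε).comap d from this ha
  refine le_of_forall_homogeneous_mem 𝒜 hO fun i a hai ha ↦ mem_orphanSubmodule.2 fun b ↦ ?_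
  calc
    ε (d a * b) = ε (d a * b) + σ i • ε (a * d b) := by
      rw [mem_orphanSubmodule.1 ha, smul_zero, add_zero]
    _ = ε (d (a * b)) := by rw [hleib i a b hai, map_add, map_smul]
    _ = 0 := hεd _

/-- The scalars `χ i j` and `σ i` generalize the Koszul signs `(-1) ^ (i * j)` and `(-1) ^ i`. -/
theorem orphans_differential_ideal_general [AddRightCancelMonoid ι] [GradedRing 𝒜]
    (d : A →ₗ[R] A) (n : ι) (ε : A →ₗ[R] M) (χ : ι → ι → R) (σ : ι → R)
    (hcomm : ∀ i j a b, a ∈ 𝒜 i → b ∈ 𝒜 j → a * b = χ i j • (b * a))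
    (hleib : ∀ i a b, a ∈ 𝒜 i → d (a * b) = d a * b + σ i • (a * d b))
    (hε : ∀ i, i ≠ n → ∀ a ∈ 𝒜 i, ε a = 0) (hεd : ∀ a, ε (d a) = 0) :
    (∀ a x, a ∈ orphanSubmodule ε → a * x ∈ orphanSubmodule ε ∧ x * a ∈ orphanSubmodule ε) ∧
      ∀ a ∈ orphanSubmodule ε, d a ∈ orphanSubmodule ε := by
  have hO := orphanSubmodule_isHomogeneous 𝒜 hε
  exact ⟨fun _ x ha ↦ ⟨orphanSubmodule_mul_mem_right ha x,
    orphanSubmodule_mul_mem_left 𝒜 hO hcomm ha x⟩,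
    fun _ ha ↦ orphanSubmodule_map_mem 𝒜 hO hεd hleib ha⟩

end OrphanSubmodule

/-- the set of orphans is a differential ideal of `(A,d)`:
it contains `0`, is closed under addition, scalar multiplication, multiplication
by arbitrary elements of `A`, and under the differential. -/
theorem orphans_differential_ideal {k A : Type} [Field k] [Ring A] [Algebra k A]
    (𝒜 : ℕ → Submodule k A) [GradedRing 𝒜]
    (d : A →ₗ[k] A) (n : ℕ) (ε : A →ₗ[k] k)
    (hgc : GradedComm 𝒜) (hd : IsDifferential 𝒜 d)
    (hhom : ∀ i : ℕ, i ≠ n → ∀ a ∈ 𝒜 i, ε a = 0)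
    (hεd : ∀ a ∈ 𝒜 (n - 1), ε (d a) = 0) :
    ((∀ b : A, ε ((0 : A) * b) = 0) ∧
     (∀ a a' : A, (∀ b, ε (a * b) = 0) → (∀ b, ε (a' * b) = 0) →
       ∀ b, ε ((a + a') * b) = 0) ∧
     (∀ (r : k) (a : A), (∀ b, ε (a * b) = 0) → ∀ b, ε ((r • a) * b) = 0)) ∧
    (∀ a x : A, (∀ b, ε (a * b) = 0) →
      (∀ b, ε ((a * x) * b) = 0) ∧ (∀ b, ε ((x * a) * b) = 0)) ∧
    (∀ a : A, (∀ b, ε (a * b) = 0) → ∀ b, ε (d a * b) = 0) := by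
  simp only [← mem_orphanSubmodule]
  exact ⟨⟨zero_mem _, fun _ _ ↦ add_mem, fun r _ ↦ Submodule.smul_mem _ r⟩,
    orphans_differential_ideal_general 𝒜 d n ε _ _ hgc.mul_comm hd.leibniz hhom <|
      map_map_eq_zero_of_degree 𝒜 hhom hd.grade fun _ hi ↦ Nat.eq_sub_of_add_eq hi ▸ hεd⟩

end PDCDGA
end

section
/- If H^*(A,d) is a Poincaré duality algebra in dimension n with orientation induced by ε, then every cocycle in the orphan ideal is a coboundary: O ∩ ker d ⊆ d(A). -/
namespace PDCDGA

variable {k : Type} [Field k]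

/-!
Everything rests on one remark: an additive map on a graded object that kills every degree but `i`
depends only on the `i`-th component of its argument. Applied to `x ↦ (d x)ᵢ₊₁` it shows that the
components of a cocycle are cocycles; applied to `x ↦ ε (x * b)` with `b` of degree `n - i` it shows
that `ε (aᵢ * b) = ε (a * b)`, which vanishes if `a` is an orphan. By duality each `aᵢ` is then a
coboundary, and so is their sum `a`.
-/

section Decomposition

open DirectSum

variable {ι κ M N σ τ : Type*} [DecidableEq ι] [AddCommMonoid M] [AddCommMonoid N]
  [SetLike σ M] [AddSubmonoidClass σ M] (ℳ : ι → σ) [Decomposition ℳ]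

lemma map_coe_decompose_of_forall_ne {f : M →+ N} {i : ι}
    (hf : ∀ j, j ≠ i → ∀ x ∈ ℳ j, f x = 0) (x : M) :
    f (decompose ℳ x i) = f x := by
  induction x using Decomposition.inductionOn ℳ with
  | zero => simp
  | @homogeneous j x =>
    obtain rfl | hji := eq_or_ne j i
    · rw [decompose_of_mem_same ℳ x.2]
    · rw [decompose_of_mem_ne ℳ x.2 hji, map_zero, hf j hji x x.2]
  | add x y hx hy =>
    simp only [decompose_add, DirectSum.add_apply, AddMemClass.coe_add, map_add, hx, hy]

lemma coe_decompose_map_of_injective [DecidableEq κ] [SetLike τ N] [AddSubmonoidClass τ N]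
    (𝒩 : κ → τ) [Decomposition 𝒩] {f : M →+ N} {s : ι → κ} (hs : Function.Injective s)
    (hf : ∀ i, ∀ x ∈ ℳ i, f x ∈ 𝒩 (s i)) (x : M) (i : ι) :
    (decompose 𝒩 (f x) (s i) : N) = f (decompose ℳ x i) := by
  let g : M →+ N :=
    { toFun y := decompose 𝒩 (f y) (s i)
      map_zero' := by simp
      map_add' := by simp }
  have hg : ∀ j, j ≠ i → ∀ y ∈ ℳ j, g y = 0 := fun j hji y hy ↦
    decompose_of_mem_ne 𝒩 (hf j y hy) (hs.ne hji)
  calc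
    (decompose 𝒩 (f x) (s i) : N) = decompose 𝒩 (f (decompose ℳ x i)) (s i) :=
      (map_coe_decompose_of_forall_ne ℳ hg x).symm
    _ = f (decompose ℳ x i) := decompose_of_mem_same 𝒩 (hf i _ (SetLike.coe_mem _))

end Decomposition

section GradedRing

open DirectSum

variable {ι A M σ : Type*} [DecidableEq ι] [AddRightCancelMonoid ι] [Semiring A]
  [AddCommMonoid M] [SetLike σ A] [AddSubmonoidClass σ A] (𝒜 : ι → σ) [GradedRing 𝒜]

lemma map_coe_decompose_mul_of_forall_ne {ε : A →+ M} {n i j : ι}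
    (hε : ∀ l, l ≠ n → ∀ x ∈ 𝒜 l, ε x = 0) (hij : i + j = n) (a : A) {b : A} (hb : b ∈ 𝒜 j) :
    ε (decompose 𝒜 a i * b) = ε (a * b) := by
  refine map_coe_decompose_of_forall_ne 𝒜 (f := ε.comp (AddMonoidHom.mulRight b)) ?_ a
  intro l hli x hx
  exact hε (l + j) (fun hlj ↦ hli (add_right_cancel (hlj.trans hij.symm))) _
    (SetLike.mul_mem_graded hx hb)

theorem orphan_cocycle_is_coboundary_general {d : A →+ A} {s n : ι} {ε : A →+ M}
    (hd : ∀ i, ∀ x ∈ 𝒜 i, d x ∈ 𝒜 (i + s)) (hε : ∀ i, i ≠ n → ∀ x ∈ 𝒜 i, ε x = 0)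
    (hpd : ∀ i, ∀ x ∈ 𝒜 i, d x = 0 →
      (∀ j, i + j = n → ∀ b ∈ 𝒜 j, d b = 0 → ε (x * b) = 0) → x ∈ AddMonoidHom.mrange d)
    {a : A} (ha : ∀ b, ε (a * b) = 0) (hda : d a = 0) :
    a ∈ AddMonoidHom.mrange d := by
  classical
  rw [← sum_support_decompose 𝒜 a]
  refine sum_mem fun i _ ↦ hpd i _ (SetLike.coe_mem _) ?_ fun j hij b hb _ ↦ ?_
  · rw [← coe_decompose_map_of_injective 𝒜 𝒜 (add_left_injective s) hd, hda]
    simp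
  · rw [map_coe_decompose_mul_of_forall_ne 𝒜 hε hij a hb, ha b]

end GradedRing

/-- if `H^*(A,d)` is a Poincaré duality algebra in dimension `n`
with orientation `ε`, then every cocycle in the orphan ideal is a coboundary. -/
theorem orphan_cocycle_is_coboundary {k A : Type} [Field k] [Ring A] [Algebra k A]
    (𝒜 : ℕ → Submodule k A) [GradedRing 𝒜]
    (d : A →ₗ[k] A) (n : ℕ) (ε : A →ₗ[k] k)
    (hgc : GradedComm 𝒜) (hd : IsDifferential 𝒜 d)
    (hor : IsOrientation 𝒜 d n ε) (hpd : CohomologyPD 𝒜 d n ε) :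
    ∀ a : A, a ∈ Orphans ε → d a = 0 → a ∈ LinearMap.range d := by
  intro a ha hda
  refine orphan_cocycle_is_coboundary_general 𝒜 (d := d.toAddMonoidHom) (ε := ε.toAddMonoidHom)
    hd.grade hor.homog (fun i x hx hdx hxb ↦ ?_) ((mem_orphans ε a).1 ha) hda
  by_contra hx_range
  obtain ⟨j, b, hij, hb, hdb, hne⟩ := hpd i x hx hdx hx_range
  exact hne (hxb j hij b hb hdb)

end PDCDGA
end

section
/- The quotient CDGA Ā = A/O, with the induced orientation ε̄, is an oriented differential Poincaré duality algebra: the bilinear forms Ā^i ⊗ Ā^{n-i} → k, ā⊗b̄ ↦ ε̄(āb̄) are non-degenerate. -/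
namespace PDCDGA

variable {k : Type} [Field k]

section Concentrated

variable {ι A M σ : Type*} [DecidableEq ι] [AddCommMonoid M] [SetLike σ A]

lemma map_decompose_of_concentrated [AddCommMonoid A] [AddSubmonoidClass σ A] (𝒜 : ι → σ)
    [DirectSum.Decomposition 𝒜] {f : A →+ M} {n : ι}
    (hf : ∀ i, i ≠ n → ∀ a ∈ 𝒜 i, f a = 0) (a : A) :
    f (DirectSum.decompose 𝒜 a n) = f a := by
  induction a using DirectSum.Decomposition.inductionOn 𝒜 with
  | zero => simp
  | @homogeneous i a =>
    rcases eq_or_ne i n with rfl | hi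
    · simp
    · rw [DirectSum.decompose_of_mem_ne 𝒜 a.2 hi, map_zero, hf i hi a a.2]
  | add a b ha hb => simp [ha, hb]

lemma map_mul_decompose_of_concentrated [AddLeftCancelMonoid ι] [Semiring A]
    [AddSubmonoidClass σ A] (𝒜 : ι → σ) [GradedRing 𝒜] {f : A →+ M} {n i j : ι}
    (hf : ∀ i, i ≠ n → ∀ a ∈ 𝒜 i, f a = 0) (hij : i + j = n) {a : A} (ha : a ∈ 𝒜 i) (b : A) :
    f (a * DirectSum.decompose 𝒜 b j) = f (a * b) := by
  rw [← DirectSum.coe_decompose_mul_add_of_left_mem 𝒜 ha, hij,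
    map_decompose_of_concentrated 𝒜 hf]

end Concentrated

section Orphans

variable {A : Type} [Ring A] [Algebra k A] {ε : A →ₗ[k] k}

lemma orphans_le_ker (ε : A →ₗ[k] k) : Orphans ε ≤ LinearMap.ker ε := fun a ha => by
  simpa using (mem_orphans ε a).mp ha 1

lemma mem_orphans_iff_of_mem {ι : Type*} [DecidableEq ι] [AddLeftCancelMonoid ι]
    (𝒜 : ι → Submodule k A) [GradedRing 𝒜] {n i j : ι}
    (hε : ∀ i, i ≠ n → ∀ a ∈ 𝒜 i, ε a = 0) (hij : i + j = n) {a : A} (ha : a ∈ 𝒜 i) :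
    a ∈ Orphans ε ↔ ∀ b ∈ 𝒜 j, ε (a * b) = 0 := by
  rw [mem_orphans]
  refine ⟨fun h b _ => h b, fun h b => ?_⟩
  calc ε (a * b) = ε (a * DirectSum.decompose 𝒜 b j) :=
        (map_mul_decompose_of_concentrated 𝒜 (f := ε.toAddMonoidHom) hε hij ha b).symm
    _ = 0 := h _ (SetLike.coe_mem _)

/-- Commutativity up to a unit abstracts the Koszul signs, so that `ℤ`-graded and
colour-commutative algebras are covered. -/
theorem quotient_is_differential_PD_general {ι : Type*} [DecidableEq ι] [AddCancelCommMonoid ι]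
    (𝒜 : ι → Submodule k A) [GradedRing 𝒜] {n : ι}
    (hcomm : ∀ i j, ∀ a ∈ 𝒜 i, ∀ b ∈ 𝒜 j, ∃ u : kˣ, a * b = u • (b * a))
    (hε : ∀ i, i ≠ n → ∀ a ∈ 𝒜 i, ε a = 0) :
    (∀ a ∈ Orphans ε, ε a = 0) ∧
    (∀ i j, i + j = n → ∀ a ∈ 𝒜 i, a ∉ Orphans ε → ∃ b ∈ 𝒜 j, ε (a * b) ≠ 0) ∧
    (∀ i j, i + j = n → ∀ b ∈ 𝒜 j, b ∉ Orphans ε → ∃ a ∈ 𝒜 i, ε (a * b) ≠ 0) := by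
  have left_nondegenerate : ∀ i j, i + j = n → ∀ a ∈ 𝒜 i, a ∉ Orphans ε →
      ∃ b ∈ 𝒜 j, ε (a * b) ≠ 0 := fun i j hij a ha hna => by
    simpa [mem_orphans_iff_of_mem 𝒜 hε hij ha] using hna
  refine ⟨orphans_le_ker ε, left_nondegenerate, fun i j hij b hb hnb => ?_⟩
  obtain ⟨a, ha, hba⟩ := left_nondegenerate j i (by rwa [add_comm]) b hb hnb
  obtain ⟨u, hu⟩ := hcomm i j a ha b hb
  refine ⟨a, ha, ?_⟩
  rwa [hu, Units.smul_def, map_smul, ← Units.smul_def, smul_ne_zero_iff_ne]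

end Orphans

/-- the quotient `Ā = A/O` with the induced orientation `ε̄` is an
oriented differential Poincaré duality algebra: `ε` vanishes on `O` (so it descends
to `Ā`), and the induced pairings `Āⁱ ⊗ Ā^{n-i} → k` are non-degenerate
(stated on representatives: a class is nonzero iff its representative is not an orphan). -/
theorem quotient_is_differential_PD {k A : Type} [Field k] [Ring A] [Algebra k A]
    (𝒜 : ℕ → Submodule k A) [GradedRing 𝒜]
    (d : A →ₗ[k] A) (n : ℕ) (ε : A →ₗ[k] k)
    (hgc : GradedComm 𝒜) (hd : IsDifferential 𝒜 d)
    (hconn : ∀ a ∈ 𝒜 0, ∃ r : k, a = r • (1 : A))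
    (hft : ∀ i : ℕ, FiniteDimensional k (𝒜 i))
    (hor : IsOrientation 𝒜 d n ε) (hpd : CohomologyPD 𝒜 d n ε) :
    (∀ a ∈ Orphans ε, ε a = 0) ∧
    (∀ i jd : ℕ, i + jd = n → ∀ a : A, a ∈ 𝒜 i → a ∉ Orphans ε →
      ∃ b ∈ 𝒜 jd, ε (a * b) ≠ 0) ∧
    (∀ i jd : ℕ, i + jd = n → ∀ b : A, b ∈ 𝒜 jd → b ∉ Orphans ε →
      ∃ a ∈ 𝒜 i, ε (a * b) ≠ 0) := by
  exact quotient_is_differential_PD_general 𝒜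
    (fun i j a ha b hb => ⟨(-1) ^ (i * j), by
      simpa [Units.smul_def] using hgc.mul_comm i j a b ha hb⟩)
    hor.homog

end PDCDGA
end

section
/- If the orphan ideal O has H^i(O,d) = 0 for all i with n/2 + 1 ≤ i ≤ n+1 (i.e. O is (n+1)-half-acyclic), then the quotient map π: A → A/O is a quasi-isomorphism. -/
/-!
Orphan cocycles are boundaries, because homogeneous components of orphans are orphans and, by
Poincaré duality, a cocycle pairing to zero with everything is exact. In the long exact sequence
this says `H(O) → H(A)` is zero, so `H(A) → H(A/O)` is injective.

For surjectivity, let `d x` be an orphan with `x` of degree `i`. If `n ≤ 2 * i`, then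
half-acyclicity corrects `x` by an orphan to a cocycle. If `2 * i < n`, put `j = n - i`. Since `d`
is self-adjoint up to sign for `(a, b) ↦ ε (a * b)`, any `u` of degree `j` orthogonal to the
cocycles of degree `i` has orphan differential; the upper-half case and Poincaré duality then make
`u` a boundary plus an orphan, so `u` is orthogonal to `x` too. By double annihilation in finite
dimension, `x` and some cocycle define the same functional on degree `j`, so they differ by an
orphan.
-/

namespace PDCDGA

variable {k : Type} [Field k]

lemma exists_mem_apply_eq_of_forall_apply_eq_zero {K V W : Type*} [Field K]
    [AddCommGroup V] [Module K V] [AddCommGroup W] [Module K W]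
    (B : V →ₗ[K] Module.Dual K W) (Z : Submodule K V) [FiniteDimensional K Z] {x : V}
    (h : ∀ w, (∀ z ∈ Z, B z w = 0) → B x w = 0) : ∃ z ∈ Z, B z = B x := by
  rw [← Submodule.mem_map, ← Subspace.dualCoannihilator_dualAnnihilator_eq (W := Z.map B),
    Submodule.mem_dualAnnihilator]
  intro w hw
  rw [Submodule.mem_dualCoannihilator] at hw
  exact h w fun z hz => hw _ (Submodule.mem_map_of_mem hz)

lemma mem_of_forall_decompose_mem {ι R M : Type*} [DecidableEq ι] [Semiring R] [AddCommMonoid M]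
    [Module R M] (ℳ : ι → Submodule R M) [DirectSum.Decomposition ℳ] (p : Submodule R M) {x : M}
    (h : ∀ i, (DirectSum.decompose ℳ x i : M) ∈ p) : x ∈ p := by
  classical
  rw [← DirectSum.sum_support_decompose ℳ x]
  exact p.sum_mem fun i _ => h i

section

variable {A : Type} [Ring A] [Algebra k A] {𝒜 : ℕ → Submodule k A}
  {d : A →ₗ[k] A} {n i j : ℕ} {ε : A →ₗ[k] k} {a b o u x : A}

lemma GradedComm.apply_mul_eq_zero_comm (hgc : GradedComm 𝒜) (ha : a ∈ 𝒜 i) (hb : b ∈ 𝒜 j) :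
    ε (a * b) = 0 ↔ ε (b * a) = 0 := by
  rw [hgc.mul_comm i j a b ha hb, map_smul, smul_eq_zero_iff_right (pow_ne_zero _ (by simp))]

lemma IsOrientation.apply_d_mul_eq_zero_iff (hor : IsOrientation 𝒜 d n ε)
    (hd : IsDifferential 𝒜 d) (ha : a ∈ 𝒜 i) (b : A) :
    ε (d a * b) = 0 ↔ ε (a * d b) = 0 := by
  have hsum : ε (d a * b) + (-1 : k) ^ i • ε (a * d b) = 0 := by
    rw [← map_smul, ← map_add, ← hd.leibniz i a b ha, hor.eps_d]
  rw [eq_neg_of_add_eq_zero_left hsum, neg_eq_zero,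
    smul_eq_zero_iff_right (pow_ne_zero _ (by simp))]

lemma CohomologyPD.mem_range_of_forall_apply_mul_eq_zero (hpd : CohomologyPD 𝒜 d n ε)
    (ha : a ∈ 𝒜 i) (hda : d a = 0)
    (h : ∀ j, i + j = n → ∀ b ∈ 𝒜 j, d b = 0 → ε (a * b) = 0) : a ∈ LinearMap.range d := by
  by_contra hne
  obtain ⟨j, b, hij, hb, hdb, hab⟩ := hpd i a ha hda hne
  exact hab (h j hij b hb hdb)

lemma OrphansHalfAcyclic.exists_mem_orphans_d_eq {N : ℕ} (hha : OrphansHalfAcyclic 𝒜 d n ε N)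
    (hd : IsDifferential 𝒜 d) (hni : n ≤ 2 * i) (hiN : i < N) (hx : x ∈ 𝒜 i)
    (hdx : d x ∈ Orphans ε) : ∃ o ∈ Orphans ε, o ∈ 𝒜 i ∧ d o = d x := by
  obtain ⟨o, ho, hoi, hdo⟩ :=
    hha (i + 1) (by omega) hiN (d x) hdx (hd.grade i x hx) (hd.d_sq x)
  exact ⟨o, ho, hoi, hdo.symm⟩

variable [GradedRing 𝒜]

lemma IsDifferential.decompose_d_succ (hd : IsDifferential 𝒜 d) (x : A) (i : ℕ) :
    (DirectSum.decompose 𝒜 (d x) (i + 1) : A) = d (DirectSum.decompose 𝒜 x i) := by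
  induction x using DirectSum.Decomposition.inductionOn 𝒜 with
  | zero => simp
  | @homogeneous m a =>
    have hda := hd.grade m a a.2
    by_cases hm : m = i
    · subst hm
      rw [DirectSum.decompose_of_mem_same 𝒜 hda, DirectSum.decompose_of_mem_same 𝒜 a.2]
    · rw [DirectSum.decompose_of_mem_ne 𝒜 hda (by omega),
        DirectSum.decompose_of_mem_ne 𝒜 a.2 hm, map_zero]
  | add a b ha hb => simp [DirectSum.decompose_add, ha, hb]

namespace IsOrientation

lemma apply_decompose (hor : IsOrientation 𝒜 d n ε) (x : A) :
    ε (DirectSum.decompose 𝒜 x n) = ε x := by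
  induction x using DirectSum.Decomposition.inductionOn 𝒜 with
  | zero => simp
  | @homogeneous m a =>
    by_cases hm : m = n
    · subst hm
      rw [DirectSum.decompose_of_mem_same 𝒜 a.2]
    · rw [DirectSum.decompose_of_mem_ne 𝒜 a.2 hm, map_zero, hor.homog m hm a a.2]
  | add a b ha hb => simp [DirectSum.decompose_add, ha, hb]

lemma mem_orphans_iff (hor : IsOrientation 𝒜 d n ε) (ha : a ∈ 𝒜 i) :
    a ∈ Orphans ε ↔ ∀ j, i + j = n → ∀ b ∈ 𝒜 j, ε (a * b) = 0 := by
  rw [mem_orphans]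
  refine ⟨fun h j _ b _ => h b, fun h b => ?_⟩
  refine mem_of_forall_decompose_mem 𝒜 (LinearMap.ker (ε ∘ₗ LinearMap.mulLeft k a)) fun j => ?_
  by_cases hij : i + j = n
  · exact h j hij _ (SetLike.coe_mem _)
  · exact hor.homog _ hij _ (SetLike.mul_mem_graded ha (SetLike.coe_mem _))

lemma mem_orphans_of_lt (hor : IsOrientation 𝒜 d n ε) (hni : n < i) (ha : a ∈ 𝒜 i) :
    a ∈ Orphans ε :=
  (hor.mem_orphans_iff ha).2 fun _ hij => by omega

lemma isHomogeneous_orphans (hor : IsOrientation 𝒜 d n ε) : (Orphans ε).IsHomogeneous 𝒜 := by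
  intro i o ho
  refine (hor.mem_orphans_iff (SetLike.coe_mem _)).2 fun j hij b hb => ?_
  rw [← DirectSum.coe_decompose_mul_add_of_right_mem 𝒜 hb, hij, hor.apply_decompose]
  exact (mem_orphans ε o).1 ho b

lemma apply_mul_eq_zero_of_mem_orphans (hor : IsOrientation 𝒜 d n ε) (hgc : GradedComm 𝒜)
    (ha : a ∈ 𝒜 i) (ho : o ∈ Orphans ε) : ε (a * o) = 0 := by
  refine mem_of_forall_decompose_mem 𝒜 (LinearMap.ker (ε ∘ₗ LinearMap.mulLeft k a)) fun j => ?_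
  exact (hgc.apply_mul_eq_zero_comm ha (SetLike.coe_mem _)).2
    ((mem_orphans ε _).1 (hor.isHomogeneous_orphans j ho) a)

lemma orphans_inf_ker_le_range (hor : IsOrientation 𝒜 d n ε) (hd : IsDifferential 𝒜 d)
    (hpd : CohomologyPD 𝒜 d n ε) : Orphans ε ⊓ LinearMap.ker d ≤ LinearMap.range d := by
  rintro o ⟨ho, hdo : d o = 0⟩
  refine mem_of_forall_decompose_mem 𝒜 _ fun i => ?_
  refine hpd.mem_range_of_forall_apply_mul_eq_zero (SetLike.coe_mem _) ?_ fun _ _ b _ _ =>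
    (mem_orphans ε _).1 (hor.isHomogeneous_orphans i ho) b
  simp [← hd.decompose_d_succ, hdo]

lemma d_mem_orphans_of_orthogonal_cocycles (hor : IsOrientation 𝒜 d n ε) (hgc : GradedComm 𝒜)
    (hd : IsDifferential 𝒜 d) (hij : i + j = n) (hu : u ∈ 𝒜 j)
    (h : ∀ a ∈ 𝒜 i, d a = 0 → ε (a * u) = 0) : d u ∈ Orphans ε := by
  have hdu := hd.grade j u hu
  refine (hor.mem_orphans_iff hdu).2 fun q hq b hb => ?_
  obtain rfl : i = q + 1 := by omega
  rw [hgc.apply_mul_eq_zero_comm hdu hb, ← hor.apply_d_mul_eq_zero_iff hd hb]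
  exact h (d b) (hd.grade q b hb) (hd.d_sq b)

lemma mem_range_sup_orphans_of_orthogonal_cocycles (hor : IsOrientation 𝒜 d n ε)
    (hgc : GradedComm 𝒜) (hd : IsDifferential 𝒜 d) (hpd : CohomologyPD 𝒜 d n ε)
    (hha : OrphansHalfAcyclic 𝒜 d n ε (n + 1)) (hij : i + j = n) (hnj : n ≤ 2 * j)
    (hu : u ∈ 𝒜 j) (h : ∀ a ∈ 𝒜 i, d a = 0 → ε (a * u) = 0) :
    u ∈ LinearMap.range d ⊔ Orphans ε := by
  have hdu := hor.d_mem_orphans_of_orthogonal_cocycles hgc hd hij hu h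
  obtain ⟨o, ho, hoj, hdo⟩ := hha.exists_mem_orphans_d_eq hd hnj (by omega) hu hdu
  have hexact : u - o ∈ LinearMap.range d := by
    refine hpd.mem_range_of_forall_apply_mul_eq_zero (sub_mem hu hoj)
      (by rw [map_sub, hdo, sub_self]) fun i' hi' a ha hda => ?_
    obtain rfl : i' = i := by omega
    rw [sub_mul, map_sub, (mem_orphans ε o).1 ho a, sub_zero,
      hgc.apply_mul_eq_zero_comm hu ha]
    exact h a ha hda
  rw [← sub_add_cancel u o]
  exact Submodule.add_mem_sup hexact ho

lemma apply_mul_eq_zero_of_mem_range_sup_orphans (hor : IsOrientation 𝒜 d n ε)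
    (hgc : GradedComm 𝒜) (hd : IsDifferential 𝒜 d) (hx : x ∈ 𝒜 i) (hdx : d x ∈ Orphans ε)
    (hu : u ∈ LinearMap.range d ⊔ Orphans ε) : ε (x * u) = 0 := by
  obtain ⟨_, ⟨w, rfl⟩, o, ho, rfl⟩ := Submodule.mem_sup.1 hu
  rw [mul_add, map_add, hor.apply_mul_eq_zero_of_mem_orphans hgc hx ho, add_zero,
    ← hor.apply_d_mul_eq_zero_iff hd hx]
  exact (mem_orphans ε _).1 hdx w

lemma mem_ker_sup_orphans_of_two_mul_lt (hor : IsOrientation 𝒜 d n ε) (hgc : GradedComm 𝒜)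
    (hd : IsDifferential 𝒜 d) (hpd : CohomologyPD 𝒜 d n ε)
    (hha : OrphansHalfAcyclic 𝒜 d n ε (n + 1)) [FiniteDimensional k (𝒜 i)] (hin : 2 * i < n)
    (hx : x ∈ 𝒜 i) (hdx : d x ∈ Orphans ε) : x ∈ LinearMap.ker d ⊔ Orphans ε := by
  obtain ⟨j, hij⟩ : ∃ j, i + j = n := ⟨n - i, by omega⟩
  let pairing : A →ₗ[k] Module.Dual k (𝒜 j) :=
    ((LinearMap.mul k A).compr₂ ε).domRestrict₂ (𝒜 j)
  obtain ⟨z, ⟨hz, hdz⟩, hzx⟩ : ∃ z ∈ 𝒜 i ⊓ LinearMap.ker d, pairing z = pairing x := by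
    refine exists_mem_apply_eq_of_forall_apply_eq_zero pairing _ fun u hu => ?_
    exact hor.apply_mul_eq_zero_of_mem_range_sup_orphans hgc hd hx hdx <|
      hor.mem_range_sup_orphans_of_orthogonal_cocycles hgc hd hpd hha hij (by omega) u.2
        fun a ha hda => hu a ⟨ha, hda⟩
  have hxz : x - z ∈ Orphans ε := by
    refine (hor.mem_orphans_iff (sub_mem hx hz)).2 fun q hq b hb => ?_
    obtain rfl : q = j := by omega
    have hzb : ε (z * b) = ε (x * b) := LinearMap.congr_fun hzx ⟨b, hb⟩
    rw [sub_mul, map_sub, hzb, sub_self]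
  rw [← add_sub_cancel z x]
  exact Submodule.add_mem_sup hdz hxz

lemma mem_ker_sup_orphans_of_le_two_mul (hor : IsOrientation 𝒜 d n ε) (hd : IsDifferential 𝒜 d)
    (hha : OrphansHalfAcyclic 𝒜 d n ε (n + 1)) (hni : n ≤ 2 * i) (hx : x ∈ 𝒜 i)
    (hdx : d x ∈ Orphans ε) : x ∈ LinearMap.ker d ⊔ Orphans ε := by
  rcases lt_or_ge n i with hlt | hle
  · exact Submodule.mem_sup_right (hor.mem_orphans_of_lt hlt hx)
  · obtain ⟨o, ho, -, hdo⟩ := hha.exists_mem_orphans_d_eq hd hni (by omega) hx hdx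
    rw [← sub_add_cancel x o]
    exact Submodule.add_mem_sup (LinearMap.sub_mem_ker_iff.2 hdo.symm) ho

lemma comap_orphans_le_ker_sup_orphans (hor : IsOrientation 𝒜 d n ε) (hgc : GradedComm 𝒜)
    (hd : IsDifferential 𝒜 d) (hpd : CohomologyPD 𝒜 d n ε)
    (hha : OrphansHalfAcyclic 𝒜 d n ε (n + 1))
    (hfin : ∀ i, 2 * i < n → FiniteDimensional k (𝒜 i)) :
    (Orphans ε).comap d ≤ LinearMap.ker d ⊔ Orphans ε := by
  intro x hx
  refine mem_of_forall_decompose_mem 𝒜 _ fun i => ?_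
  have hdx : d (DirectSum.decompose 𝒜 x i) ∈ Orphans ε := by
    rw [← hd.decompose_d_succ]
    exact hor.isHomogeneous_orphans (i + 1) hx
  rcases lt_or_ge (2 * i) n with hin | hni
  · have := hfin i hin
    exact hor.mem_ker_sup_orphans_of_two_mul_lt hgc hd hpd hha hin (SetLike.coe_mem _) hdx
  · exact hor.mem_ker_sup_orphans_of_le_two_mul hd hha hni (SetLike.coe_mem _) hdx

end IsOrientation

end

theorem projection_quasi_iso_of_half_acyclic_general {k A : Type} [Field k] [Ring A] [Algebra k A]
    (𝒜 : ℕ → Submodule k A) [GradedRing 𝒜]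
    (d : A →ₗ[k] A) (n : ℕ) (ε : A →ₗ[k] k)
    (hgc : GradedComm 𝒜) (hd : IsDifferential 𝒜 d)
    (hfin : ∀ i : ℕ, 2 * i < n → FiniteDimensional k (𝒜 i))
    (hor : IsOrientation 𝒜 d n ε) (hpd : CohomologyPD 𝒜 d n ε)
    (hha : OrphansHalfAcyclic 𝒜 d n ε (n + 1)) :
    (∀ z : A, d z = 0 → (∃ o ∈ Orphans ε, z - o ∈ LinearMap.range d) →
      z ∈ LinearMap.range d) ∧
    (∀ x : A, d x ∈ Orphans ε →
      ∃ z o b : A, d z = 0 ∧ o ∈ Orphans ε ∧ x = z + o + d b) := by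
  constructor
  · rintro z hz ⟨o, ho, b, hb⟩
    have hdo : d o = 0 := by
      simpa [hb, hz] using hd.d_sq b
    rw [← sub_add_cancel z o]
    exact add_mem ⟨b, hb⟩ (hor.orphans_inf_ker_le_range hd hpd ⟨ho, hdo⟩)
  · intro x hx
    obtain ⟨z, hz, o, ho, rfl⟩ := Submodule.mem_sup.1 <|
      hor.comap_orphans_le_ker_sup_orphans hgc hd hpd hha hfin hx
    exact ⟨z, o, 0, hz, ho, by simp⟩

/-- if the orphan ideal is `(n+1)`-half-acyclic then the projection
`π : A → A/O` is a quasi-isomorphism (stated at the chain level: `H(π)` is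
injective and surjective). -/
theorem projection_quasi_iso_of_half_acyclic {k A : Type} [Field k] [Ring A] [Algebra k A]
    (𝒜 : ℕ → Submodule k A) [GradedRing 𝒜]
    (d : A →ₗ[k] A) (n : ℕ) (ε : A →ₗ[k] k)
    (hgc : GradedComm 𝒜) (hd : IsDifferential 𝒜 d)
    (hconn : ∀ a ∈ 𝒜 0, ∃ r : k, a = r • (1 : A))
    (hft : ∀ i : ℕ, FiniteDimensional k (𝒜 i))
    (hor : IsOrientation 𝒜 d n ε) (hpd : CohomologyPD 𝒜 d n ε)
    (hha : OrphansHalfAcyclic 𝒜 d n ε (n + 1)) :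
    (∀ z : A, d z = 0 → (∃ o ∈ Orphans ε, z - o ∈ LinearMap.range d) →
      z ∈ LinearMap.range d) ∧
    (∀ x : A, d x ∈ Orphans ε →
      ∃ z o b : A, d z = 0 ∧ o ∈ Orphans ε ∧ x = z + o + d b) := by
  exact projection_quasi_iso_of_half_acyclic_general 𝒜 d n ε hgc hd (fun i _ => hft i) hor hpd hha

end PDCDGA
end

section
/- For an oriented differential Poincaré duality algebra (A,d,ε) of dimension n, the cohomology H^*(A,d) is a Poincaré duality algebra in dimension n: the induced forms H^i(A) ⊗ H^{n-i}(A) → k are non-degenerate. -/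
/-!
Let `a` be an element of degree `i` that is not a coboundary. The coboundaries of degree `i` form a
finite-dimensional subspace, so by non-degeneracy some `b` of degree `j = n - i` is orthogonal to
all of them but not to `a`. Integration by parts, `ε (c * d b) = ± ε (d c * b)`, shows that `d b` is
orthogonal to everything of degree `i - 1`, hence `d b = 0`.
-/

namespace PDCDGA

variable {k : Type} [Field k]

theorem exists_forall_mem_eq_zero_and_apply_ne_zero {K V U : Type*} [Field K]
    [AddCommGroup V] [Module K V] [AddCommGroup U] [Module K U] {B : V →ₗ[K] U →ₗ[K] K}
    (hB : B.SeparatingLeft) {W : Submodule K V} [FiniteDimensional K W] {v : V} (hv : v ∉ W) :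
    ∃ u : U, (∀ w ∈ W, B w u = 0) ∧ B v u ≠ 0 := by
  have hBv : B v ∉ W.map B := by
    rintro ⟨w, hw, hwv⟩
    rw [LinearMap.ker_eq_bot.mp (LinearMap.separatingLeft_iff_ker_eq_bot.mp hB) hwv] at hw
    exact hv hw
  rw [← Subspace.dualCoannihilator_dualAnnihilator_eq (W := W.map B),
    Submodule.mem_dualAnnihilator] at hBv
  push Not at hBv
  obtain ⟨u, hu, hvu⟩ := hBv
  exact ⟨u, fun w hw ↦ (Submodule.mem_dualCoannihilator u).mp hu _ (Submodule.mem_map_of_mem hw),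
    hvu⟩

section

variable {A : Type} [Ring A] [Algebra k A] {𝒜 : ℕ → Submodule k A} {d : A →ₗ[k] A}
  {ε : A →ₗ[k] k} {n i j : ℕ}

/-- The bilinear form `𝒜 i × 𝒜 j → k`, `(a, b) ↦ ε (a * b)`, whose non-degeneracy for `i + j = n`
is Poincaré duality. -/
def degreePairing (𝒜 : ℕ → Submodule k A) (ε : A →ₗ[k] k) (i j : ℕ) : 𝒜 i →ₗ[k] 𝒜 j →ₗ[k] k :=
  ((LinearMap.mul k A).compr₂ ε).domRestrict₁₂ (𝒜 i) (𝒜 j)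

theorem separatingLeft_degreePairing
    (hnd : ∀ a ∈ 𝒜 i, a ≠ 0 → ∃ (l : ℕ) (b : A), i + l = n ∧ b ∈ 𝒜 l ∧ ε (a * b) ≠ 0)
    (hij : i + j = n) : (degreePairing 𝒜 ε i j).SeparatingLeft := by
  intro a ha
  by_contra hne
  obtain ⟨l, b, hil, hb, hab⟩ := hnd a a.2 (by simpa using hne)
  obtain rfl : l = j := by lia
  exact hab (ha ⟨b, hb⟩)

theorem IsDifferential.apply_mul_d (hd : IsDifferential 𝒜 d) (hεd : ∀ a : A, ε (d a) = 0)
    {a : A} (ha : a ∈ 𝒜 i) (b : A) :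
    ε (a * d b) = (-1) ^ (i + 1) * ε (d a * b) := by
  have hsum : ε (d a * b) + (-1) ^ i * ε (a * d b) = 0 := by
    simpa only [hd.leibniz i a b ha, map_add, map_smul, smul_eq_mul] using hεd (a * b)
  have hsign : (-1 : k) ^ i * (-1) ^ i = 1 := by
    simp [← mul_pow]
  linear_combination (-1) ^ i * hsum - ε (a * d b) * hsign

theorem IsDifferential.d_eq_zero_of_orthogonal_boundaries (hd : IsDifferential 𝒜 d)
    (hεd : ∀ a : A, ε (d a) = 0)
    (hnd : ∀ b ∈ 𝒜 (j + 1), b ≠ 0 →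
      ∃ (l : ℕ) (c : A), l + (j + 1) = n ∧ c ∈ 𝒜 l ∧ ε (c * b) ≠ 0)
    (hij : i + j = n) {b : A} (hb : b ∈ 𝒜 j)
    (horth : ∀ x ∈ 𝒜 i, x ∈ LinearMap.range d → ε (x * b) = 0) : d b = 0 := by
  by_contra hdb
  obtain ⟨l, c, hl, hc, hcdb⟩ := hnd (d b) (hd.grade j b hb) hdb
  obtain rfl : i = l + 1 := by lia
  apply hcdb
  rw [hd.apply_mul_d hεd hc, horth _ (hd.grade l c hc) (LinearMap.mem_range_self d c), mul_zero]

end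

theorem cohomology_PD_of_differential_PD_general {A : Type} [Ring A] [Algebra k A]
    (𝒜 : ℕ → Submodule k A) [GradedRing 𝒜] (d : A →ₗ[k] A) (n : ℕ) (ε : A →ₗ[k] k)
    (hd : IsDifferential 𝒜 d)
    (hfin : ∀ i : ℕ, FiniteDimensional k ((LinearMap.range d).submoduleOf (𝒜 i)))
    (hεd : ∀ a : A, ε (d a) = 0)
    (hndl : ∀ (i : ℕ) (a : A), a ∈ 𝒜 i → a ≠ 0 →
      ∃ (j : ℕ) (b : A), i + j = n ∧ b ∈ 𝒜 j ∧ ε (a * b) ≠ 0)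
    (hndr : ∀ (j : ℕ) (b : A), b ∈ 𝒜 j → b ≠ 0 →
      ∃ (i : ℕ) (a : A), i + j = n ∧ a ∈ 𝒜 i ∧ ε (a * b) ≠ 0) :
    CohomologyPD 𝒜 d n ε := by
  intro i a ha _ had
  have ha0 : a ≠ 0 := fun h ↦ had (h ▸ zero_mem _)
  obtain ⟨j, -, hij, -⟩ := hndl i a ha ha0
  obtain ⟨⟨b, hb⟩, horth, hab⟩ := exists_forall_mem_eq_zero_and_apply_ne_zero
    (separatingLeft_degreePairing (hndl i) hij)
    (W := (LinearMap.range d).submoduleOf (𝒜 i)) (v := ⟨a, ha⟩) had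
  have hdb : d b = 0 := hd.d_eq_zero_of_orthogonal_boundaries hεd (hndr (j + 1)) hij hb
    fun x hx hxd ↦ horth ⟨x, hx⟩ hxd
  exact ⟨j, b, hij, hb, hdb, hab⟩

/-- the cohomology of an oriented differential Poincaré duality
algebra of dimension `n` is a Poincaré duality algebra in dimension `n`. -/
theorem cohomology_PD_of_differential_PD {k A : Type} [Field k] [Ring A] [Algebra k A]
    (𝒜 : ℕ → Submodule k A) [GradedRing 𝒜]
    (d : A →ₗ[k] A) (n : ℕ) (ε : A →ₗ[k] k)
    (hgc : GradedComm 𝒜) (hd : IsDifferential 𝒜 d)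
    (hconn : ∀ a ∈ 𝒜 0, ∃ r : k, a = r • (1 : A))
    (hft : ∀ i : ℕ, FiniteDimensional k (𝒜 i))
    (hhom : ∀ i : ℕ, i ≠ n → ∀ a ∈ 𝒜 i, ε a = 0)
    (hεd : ∀ a : A, ε (d a) = 0)
    (hndl : ∀ (i : ℕ) (a : A), a ∈ 𝒜 i → a ≠ 0 →
      ∃ (jd : ℕ) (b : A), i + jd = n ∧ b ∈ 𝒜 jd ∧ ε (a * b) ≠ 0)
    (hndr : ∀ (jd : ℕ) (b : A), b ∈ 𝒜 jd → b ≠ 0 →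
      ∃ (i : ℕ) (a : A), i + jd = n ∧ a ∈ 𝒜 i ∧ ε (a * b) ≠ 0) :
    CohomologyPD 𝒜 d n ε :=
  cohomology_PD_of_differential_PD_general 𝒜 d n ε hd
    (fun i ↦ have := hft i; inferInstance) hεd hndl hndr

end PDCDGA
end

section
/- Let Z be a linear complement of O ∩ d(A) in O, and Γ = ⟨γ_1,…,γ_l⟩. Then d(Z) = d(O), Z ∩ Γ = 0, and (Z ⊕ Γ) ∩ d(A) = 0. -/
/-!
Since `d² = 0`, the complement `Z` has the same sum with `ker d` as `O`, which gives `d(Z) = d(O)`.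
The independence of the `αᵢ = dγᵢ` modulo `d(O^{k-1})` says that `Γ` meets `O^{k-1} + ker d`
trivially. As `O` and `ker d` are graded and `Γ` lives in degree `k-1`, it even meets
`O + ker d = Z + ker d` trivially. Hence `Z ∩ Γ = 0`, and modularity of the lattice of submodules
turns this together with `Z ∩ d(A) = 0` into `(Z ⊕ Γ) ∩ d(A) = 0`.
-/

namespace PDCDGA

variable {k : Type} [Field k]

section Homogeneous

variable {R M N ι κ : Type*} [Semiring R] [AddCommMonoid M] [Module R M] [AddCommMonoid N]
  [Module R N] [DecidableEq ι] (𝒜 : ι → Submodule R M) [DirectSum.Decomposition 𝒜]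

open DirectSum

theorem map_decompose_eq_decompose_map [DecidableEq κ] (ℬ : κ → Submodule R N)
    [Decomposition ℬ] {s : ι → κ} (hs : Function.Injective s) {f : M →ₗ[R] N}
    (hf : ∀ i, ∀ x ∈ 𝒜 i, f x ∈ ℬ (s i)) (i : ι) (x : M) :
    f (decompose 𝒜 x i) = decompose ℬ (f x) (s i) := by
  induction x using Decomposition.inductionOn 𝒜 with
  | zero => simp
  | @homogeneous j x =>
    have hfx := hf j x x.2
    obtain rfl | hji := eq_or_ne j i
    · rw [decompose_of_mem_same 𝒜 x.2, decompose_of_mem_same ℬ hfx]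
    · rw [decompose_of_mem_ne 𝒜 x.2 hji, decompose_of_mem_ne ℬ hfx (hs.ne hji), map_zero]
  | add x y hx hy =>
    simp only [map_add, decompose_add, DirectSum.add_apply, Submodule.coe_add, hx, hy]

theorem isHomogeneous_ker [DecidableEq κ] (ℬ : κ → Submodule R N) [Decomposition ℬ]
    {s : ι → κ} (hs : Function.Injective s) {f : M →ₗ[R] N}
    (hf : ∀ i, ∀ x ∈ 𝒜 i, f x ∈ ℬ (s i)) : (LinearMap.ker f).IsHomogeneous 𝒜 := by
  intro i x hx
  rw [LinearMap.mem_ker] at hx ⊢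
  rw [map_decompose_eq_decompose_map 𝒜 ℬ hs hf, hx, decompose_zero, DirectSum.zero_apply,
    ZeroMemClass.coe_zero]

variable {𝒜}

theorem inf_sup_le_of_isHomogeneous {P Q : Submodule R M} (hP : P.IsHomogeneous 𝒜)
    (hQ : Q.IsHomogeneous 𝒜) (i : ι) : 𝒜 i ⊓ (P ⊔ Q) ≤ (P ⊓ 𝒜 i) ⊔ Q := by
  rintro x ⟨hxi, hx⟩
  obtain ⟨p, hp, q, hq, rfl⟩ := Submodule.mem_sup.mp hx
  rw [← decompose_of_mem_same 𝒜 hxi, decompose_add, DirectSum.add_apply, Submodule.coe_add]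
  exact Submodule.add_mem_sup ⟨hP i hp, SetLike.coe_mem _⟩ (hQ i hq)

theorem disjoint_sup_of_isHomogeneous {P Q Γ : Submodule R M} (hP : P.IsHomogeneous 𝒜)
    (hQ : Q.IsHomogeneous 𝒜) {i : ι} (hΓ : Γ ≤ 𝒜 i) (h : Disjoint Γ ((P ⊓ 𝒜 i) ⊔ Q)) :
    Disjoint Γ (P ⊔ Q) :=
  disjoint_iff_inf_le.mpr <| (le_inf inf_le_left <|
    (inf_le_inf_right _ hΓ).trans (inf_sup_le_of_isHomogeneous hP hQ i)).trans h.le_bot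

theorem apply_decompose_of_forall_ne {n : ι} {f : M →ₗ[R] N}
    (hf : ∀ i, i ≠ n → ∀ x ∈ 𝒜 i, f x = 0) (x : M) : f (decompose 𝒜 x n) = f x := by
  induction x using Decomposition.inductionOn 𝒜 with
  | zero => simp
  | @homogeneous j x =>
    obtain rfl | hjn := eq_or_ne j n
    · rw [decompose_of_mem_same 𝒜 x.2]
    · rw [decompose_of_mem_ne 𝒜 x.2 hjn, map_zero, hf j hjn x x.2]
  | add x y hx hy =>
    simp only [map_add, decompose_add, DirectSum.add_apply, Submodule.coe_add, hx, hy]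

end Homogeneous

theorem isHomogeneous_orphans {A : Type} {ι : Type*} [Ring A] [Algebra k A] [DecidableEq ι]
    [AddRightCancelMonoid ι] (𝒜 : ι → Submodule k A) [GradedRing 𝒜] {n : ι} {ε : A →ₗ[k] k}
    (hε : ∀ i, i ≠ n → ∀ a ∈ 𝒜 i, ε a = 0) : (Orphans ε).IsHomogeneous 𝒜 := by
  intro i a ha
  rw [mem_orphans] at ha ⊢
  intro b
  induction b using DirectSum.Decomposition.inductionOn 𝒜 with
  | zero => rw [mul_zero, map_zero]
  | @homogeneous j b =>
    obtain rfl | hn := eq_or_ne (i + j) n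
    · rw [← DirectSum.coe_decompose_mul_add_of_right_mem 𝒜 b.2,
        apply_decompose_of_forall_ne hε, ha]
    · exact hε _ hn _ (SetLike.mul_mem_graded (SetLike.coe_mem _) b.2)
  | add b c hb hc => rw [mul_add, map_add, hb, hc, add_zero]

theorem disjoint_span_range_sup_ker {R M N ι : Type*} [Semiring R] [AddCommMonoid M] [Module R M]
    [AddCommMonoid N] [Module R N] [Fintype ι] {f : M →ₗ[R] N} {γ : ι → M} {P : Submodule R M}
    (h : ∀ (c : ι → R), ∀ p ∈ P, ∑ i, c i • f (γ i) = f p → ∀ i, c i = 0) :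
    Disjoint (Submodule.span R (Set.range γ)) (P ⊔ LinearMap.ker f) := by
  rw [Submodule.disjoint_def]
  intro x hxγ hx
  obtain ⟨c, rfl⟩ := (Submodule.mem_span_range_iff_exists_fun R).mp hxγ
  obtain ⟨p, hp, z, hz, hpz⟩ := Submodule.mem_sup.mp hx
  have hfp : ∑ i, c i • f (γ i) = f p := by
    simpa only [map_add, map_sum, map_smul, LinearMap.mem_ker.mp hz, add_zero]
      using (congrArg f hpz).symm
  simp only [h c p hp hfp, zero_smul, Finset.sum_const_zero]

theorem Z_Gamma_complement_general {R M ι : Type*} [Ring R] [AddCommGroup M] [Module R M]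
    [DecidableEq ι] [Add ι] [IsRightCancelAdd ι]
    (𝒜 : ι → Submodule R M) [DirectSum.Decomposition 𝒜]
    {d : M →ₗ[R] M} {e : ι} (hd_deg : ∀ i, ∀ x ∈ 𝒜 i, d x ∈ 𝒜 (i + e))
    (hd_sq : ∀ x, d (d x) = 0) {O Z Γ : Submodule R M} (hO : O.IsHomogeneous 𝒜)
    (hZdisj : Disjoint Z (O ⊓ LinearMap.range d)) (hZsup : Z ⊔ (O ⊓ LinearMap.range d) = O)
    {q : ι} (hΓdeg : Γ ≤ 𝒜 q) (hΓ : Disjoint Γ ((O ⊓ 𝒜 q) ⊔ LinearMap.ker d)) :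
    Submodule.map d Z = Submodule.map d O ∧ Disjoint Z Γ ∧
      Disjoint (Z ⊔ Γ) (LinearMap.range d) := by
  have range_le_ker : LinearMap.range d ≤ LinearMap.ker d :=
    LinearMap.range_le_ker_iff.mpr (LinearMap.ext hd_sq)
  have hZO : Z ≤ O := le_sup_left.trans_eq hZsup
  have sup_ker : O ⊔ LinearMap.ker d = Z ⊔ LinearMap.ker d := by
    rw [← hZsup, sup_assoc, sup_eq_right.mpr (inf_le_right.trans range_le_ker)]
  have map_eq : Submodule.map d Z = Submodule.map d O :=
    le_antisymm (Submodule.map_mono hZO)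
      ((LinearMap.map_le_map_iff d).mpr (le_sup_left.trans_eq sup_ker))
  have hΓZ : Disjoint Γ (Z ⊔ LinearMap.ker d) := by
    rw [← sup_ker]
    exact disjoint_sup_of_isHomogeneous hO
      (isHomogeneous_ker 𝒜 𝒜 (add_left_injective e) hd_deg) hΓdeg hΓ
  have hZ_range : Disjoint Z (LinearMap.range d) := by
    rwa [← disjoint_assoc, inf_eq_left.mpr hZO] at hZdisj
  refine ⟨map_eq, (hΓZ.mono_right le_sup_left).symm, ?_⟩
  rw [sup_comm]
  exact hZ_range.disjoint_sup_left_of_disjoint_sup_right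
    (hΓZ.mono_right (sup_le_sup_left range_le_ker Z))

/-- for `Z` a complement of `O ∩ d(A)` in `O` and `Γ = ⟨γ₁,…,γ_l⟩`
one has `d(Z) = d(O)`, `Z ∩ Γ = 0` and `(Z ⊕ Γ) ∩ d(A) = 0`.
(Here `γ_i ∈ A^{kk}` and `α_i ∈ A^{kk+1}`, i.e. `kk` is the paper's `k−1`.) -/
theorem Z_Gamma_complement {k A : Type} [Field k] [Ring A] [Algebra k A]
    (𝒜 : ℕ → Submodule k A) [GradedRing 𝒜]
    (d : A →ₗ[k] A) (n : ℕ) (ε : A →ₗ[k] k)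
    (hgc : GradedComm 𝒜) (hd : IsDifferential 𝒜 d)
    (hconn : ∀ a ∈ 𝒜 0, ∃ r : k, a = r • (1 : A))
    (hft : ∀ i : ℕ, FiniteDimensional k (𝒜 i))
    (hor : IsOrientation 𝒜 d n ε) (hpd : CohomologyPD 𝒜 d n ε)
    (l kk : ℕ) (α γ : Fin l → A)
    (hαm : ∀ i, α i ∈ 𝒜 (kk + 1)) (hαz : ∀ i, d (α i) = 0)
    (hαo : ∀ i, α i ∈ Orphans ε)
    (hspan : ∀ a : A, a ∈ Orphans ε → a ∈ 𝒜 (kk + 1) → d a = 0 →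
      ∃ (b : A) (cf : Fin l → k), b ∈ Orphans ε ∧ b ∈ 𝒜 kk ∧ a = d b + ∑ i, cf i • α i)
    (hind : ∀ (cf : Fin l → k) (b : A), b ∈ Orphans ε → b ∈ 𝒜 kk →
      (∑ i, cf i • α i) = d b → ∀ i, cf i = 0)
    (hγm : ∀ i, γ i ∈ 𝒜 kk) (hγd : ∀ i, d (γ i) = α i)
    (hγperp : ∀ (i : Fin l) (z : A), d z = 0 → ε (γ i * z) = 0)
    (Z : Submodule k A) (hZo : Z ≤ Orphans ε)
    (hZdisj : Z ⊓ (Orphans ε ⊓ LinearMap.range d) = ⊥)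
    (hZsup : Z ⊔ (Orphans ε ⊓ LinearMap.range d) = Orphans ε)
    (hZgr : ∀ z ∈ Z, ∀ i : ℕ, ((DirectSum.decompose 𝒜 z i : 𝒜 i) : A) ∈ Z) :
    Submodule.map d Z = Submodule.map d (Orphans ε) ∧
    Z ⊓ Submodule.span k (Set.range γ) = ⊥ ∧
    (Z ⊔ Submodule.span k (Set.range γ)) ⊓ LinearMap.range d = ⊥ := by
  simp only [← disjoint_iff] at hZdisj ⊢
  exact Z_Gamma_complement_general 𝒜 hd.grade hd.d_sq (isHomogeneous_orphans 𝒜 hor.homog)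
    hZdisj hZsup (Submodule.span_le.mpr (Set.range_subset_iff.mpr hγm))
    (disjoint_span_range_sup_ker fun c b hb h => hind c b hb.1 hb.2 (by simpa only [hγd] using h))

end PDCDGA
end

section
/- If i > n − k + 2, then O^i ⊆ Ô^i, i.e. every degree-i orphan of A remains an orphan in Â. -/
namespace PDCDGA

variable {k : Type} [Field k]

/-!
Below degree `q` the extension `Â` is the image of `A`, because every nontrivial monomial in the new
generators has degree at least `q`. Pair an orphan `a` of degree `i` with a homogeneous `x ∈ Â`. If
`x` has degree less than `q`, it comes from `A`, where `a` is an orphan; otherwise the product has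
degree at least `i + q > n`, where the orientation of `Â` vanishes.
-/

section Monomial

variable {B : Type} {σ : Type*} [Monoid B] [SetLike σ B] {l : ℕ} {c w : Fin l → B}

@[simp]
theorem monomial_zero : monomial c w 0 = 1 := by
  simp [monomial]

theorem monomial_mem {ι : Type*} [AddCommMonoid ι] (ℬ : ι → σ) [SetLike.GradedMonoid ℬ]
    {p r : Fin l → ι} (hc : ∀ t, c t ∈ ℬ (p t)) (hw : ∀ t, w t ∈ ℬ (r t))
    (μ : (Fin l → ℕ) × (Fin l → ℕ)) :
    monomial c w μ ∈ ℬ (∑ t, μ.1 t • p t + ∑ t, μ.2 t • r t) := by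
  simp only [Fin.sum_univ_def]
  exact SetLike.mul_mem_graded
    (SetLike.list_prod_map_mem_graded _ _ _ fun t _ ↦ SetLike.pow_mem_graded _ (hc t))
    (SetLike.list_prod_map_mem_graded _ _ _ fun t _ ↦ SetLike.pow_mem_graded _ (hw t))

theorem le_sum_smul_of_ne_zero {τ : Type*} [Fintype τ] {e p : τ → ℕ} {q : ℕ} (he : e ≠ 0)
    (hp : ∀ t, q ≤ p t) : q ≤ ∑ t, e t • p t := by
  obtain ⟨t, ht⟩ := Function.ne_iff.mp he
  calc
    q ≤ p t := hp t
    _ ≤ e t • p t := Nat.le_mul_of_pos_left _ (Nat.pos_of_ne_zero ht)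
    _ ≤ ∑ t, e t • p t :=
      Finset.single_le_sum (f := fun t ↦ e t • p t) (fun _ _ ↦ Nat.zero_le _) (Finset.mem_univ t)

theorem monomial_eq_one_or_exists_mem (ℬ : ℕ → σ) [SetLike.GradedMonoid ℬ] {p r : Fin l → ℕ}
    {q : ℕ} (hc : ∀ t, c t ∈ ℬ (p t)) (hw : ∀ t, w t ∈ ℬ (r t)) (hp : ∀ t, q ≤ p t)
    (hr : ∀ t, q ≤ r t) (μ : (Fin l → ℕ) × (Fin l → ℕ)) :
    monomial c w μ = 1 ∨ ∃ m, q ≤ m ∧ monomial c w μ ∈ ℬ m := by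
  obtain rfl | hμ := eq_or_ne μ 0
  · exact .inl monomial_zero
  refine .inr ⟨_, ?_, monomial_mem ℬ hc hw μ⟩
  obtain h | h : μ.1 ≠ 0 ∨ μ.2 ≠ 0 := by rwa [← not_and_or, ← Prod.mk_eq_zero]
  · exact le_add_right (le_sum_smul_of_ne_zero h hp)
  · exact le_add_left (le_sum_smul_of_ne_zero h hr)

end Monomial

section LowDegree

variable {A B σ τ : Type*} [Ring A] [Ring B] [SetLike σ A] [AddSubmonoidClass σ A] [SetLike τ B]
  [AddSubmonoidClass τ B] {𝒜 : ℕ → σ} {ℬ : ℕ → τ} [GradedRing 𝒜] [GradedRing ℬ]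

theorem coe_decompose_mul_mem_range (φ : 𝒜 →+*ᵍ ℬ) {q m : ℕ} (hm : m < q) (a : A) {s : B}
    (hs : s = 1 ∨ ∃ p, q ≤ p ∧ s ∈ ℬ p) :
    (DirectSum.decompose ℬ (φ a * s) m : B) ∈ φ.toRingHom.range := by
  obtain rfl | ⟨p, hqp, hsp⟩ := hs
  · rw [mul_one, ← φ.map_directSumDecompose]
    exact φ.toRingHom.mem_range_self _
  · rw [DirectSum.coe_decompose_mul_of_right_mem_of_not_le ℬ hsp (by lia)]
    exact zero_mem _

theorem mem_range_of_mem_of_lt (φ : 𝒜 →+*ᵍ ℬ) {q : ℕ} {ι : Type*} {s : ι → B}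
    (hs : ∀ μ, s μ = 1 ∨ ∃ p, q ≤ p ∧ s μ ∈ ℬ p)
    (hgen : ∀ x : B, ∃ f : ι →₀ A, (f.sum fun μ a ↦ φ a * s μ) = x) {m : ℕ} (hm : m < q) {x : B}
    (hx : x ∈ ℬ m) : x ∈ φ.toRingHom.range := by
  obtain ⟨f, rfl⟩ := hgen x
  rw [← DirectSum.decompose_of_mem_same ℬ hx, Finsupp.sum, DirectSum.decompose_sum,
    DFinsupp.finsetSum_apply, AddSubmonoidClass.coe_finsetSum]
  exact sum_mem fun μ _ ↦ coe_decompose_mul_mem_range φ hm (f μ) (hs μ)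

end LowDegree

theorem orphans_persist_above_general {A B : Type} [Ring A] [Algebra k A] [Ring B] [Algebra k B]
    (ℬ : ℕ → Submodule k B) [GradedRing ℬ] {ε : A →ₗ[k] k} {E : B →ₗ[k] k} (j : A →+* B)
    (hEj : ∀ a, E (j a) = ε a) {n q i : ℕ} (hE : ∀ m, n < m → ∀ x ∈ ℬ m, E x = 0)
    (hlow : ∀ m < q, ∀ x ∈ ℬ m, x ∈ j.range) (hi : n < i + q) {a : A} (ha : a ∈ Orphans ε)
    (hja : j a ∈ ℬ i) : j a ∈ Orphans E := by
  rw [mem_orphans] at ha ⊢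
  intro x
  induction x using DirectSum.Decomposition.inductionOn ℬ with
  | zero => rw [mul_zero, map_zero]
  | add x y hx hy => rw [mul_add, map_add, hx, hy, add_zero]
  | @homogeneous m x =>
    obtain hm | hm := lt_or_ge m q
    · obtain ⟨b, hb⟩ := hlow m hm x x.2
      rw [← hb, ← map_mul, hEj, ha]
    · exact hE (i + m) (by lia) _ (SetLike.mul_mem_graded hja x.2)

/-- if `i > n − k + 2` (with `k = q+2`), then `Oⁱ ⊆ Ôⁱ`:
every degree-`i` orphan of `A` remains an orphan in `Â`. -/
theorem orphans_persist_above {k A B : Type} [Field k] [Ring A] [Algebra k A] [Ring B] [Algebra k B]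
    (𝒜 : ℕ → Submodule k A) [GradedRing 𝒜] (ℬ : ℕ → Submodule k B) [GradedRing ℬ]
    (d : A →ₗ[k] A) (D : B →ₗ[k] B) (n q l : ℕ)
    (ε : A →ₗ[k] k) (E : B →ₗ[k] k)
    (hgcA : GradedComm 𝒜) (hdA : IsDifferential 𝒜 d)
    (hgcB : GradedComm ℬ) (hdB : IsDifferential ℬ D)
    (hft : ∀ i : ℕ, FiniteDimensional k (𝒜 i))
    (hconn : ∀ a ∈ 𝒜 0, ∃ r : k, a = r • (1 : A))
    (h1 : 𝒜 1 = ⊥) (h2 : ∀ a ∈ 𝒜 2, d a = 0)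
    (hn : 7 ≤ n) (hk : n + 2 ≤ 2 * (q + 2))
    (hor : IsOrientation 𝒜 d n ε) (hpd : CohomologyPD 𝒜 d n ε)
    (α γ : Fin l → A)
    (hαm : ∀ i, α i ∈ 𝒜 (q + 2)) (hαz : ∀ i, d (α i) = 0) (hαo : ∀ i, α i ∈ Orphans ε)
    (hspan : ∀ a : A, a ∈ Orphans ε → a ∈ 𝒜 (q + 2) → d a = 0 →
      ∃ (b : A) (cf : Fin l → k), b ∈ Orphans ε ∧ b ∈ 𝒜 (q + 1) ∧ a = d b + ∑ i, cf i • α i)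
    (hind : ∀ (cf : Fin l → k) (b : A), b ∈ Orphans ε → b ∈ 𝒜 (q + 1) →
      (∑ i, cf i • α i) = d b → ∀ i, cf i = 0)
    (hγm : ∀ i, γ i ∈ 𝒜 (q + 1)) (hγd : ∀ i, d (γ i) = α i)
    (hγperp : ∀ (i : Fin l) (z : A), d z = 0 → ε (γ i * z) = 0)
    (T Z : Submodule k A)
    (hT : IsCompl T (LinearMap.range d)) (hγT : ∀ i, γ i ∈ T)
    (hZo : Z ≤ Orphans ε)
    (hZdisj : Z ⊓ (Orphans ε ⊓ LinearMap.range d) = ⊥)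
    (hZsup : Z ⊔ (Orphans ε ⊓ LinearMap.range d) = Orphans ε)
    (hZT : Z ≤ T)
    (hZgr : ∀ z ∈ Z, ∀ i : ℕ, ((DirectSum.decompose 𝒜 z i : 𝒜 i) : A) ∈ Z)
    (j : A →ₐ[k] B) (hjgr : ∀ i : ℕ, ∀ a ∈ 𝒜 i, j a ∈ ℬ i)
    (hjch : ∀ a : A, D (j a) = j (d a))
    (c w : Fin l → B) (hcm : ∀ i, c i ∈ ℬ (q + 1)) (hwm : ∀ i, w i ∈ ℬ q)
    (hDc : ∀ i, D (c i) = j (α i)) (hDw : ∀ i, D (w i) = c i - j (γ i))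
    (hcase : CharZero k ∨ Odd (q + 2))
    (hfree : ∀ x : B, ∃! f : MonIdx q l →₀ A,
      (f.sum fun μ a => j a * monomial c w μ.1) = x)
    (hEj : ∀ a : A, E (j a) = ε a)
    (hEwd : ∀ (i : Fin l) (ξ : A), E (w i * j (d ξ)) = ((-1 : k) ^ (q + 2)) * ε (γ i * ξ))
    (hEcc : ∀ i i' : Fin l, E (c i * c i') = - ε (γ i * γ i'))
    (hEw : ∀ i : Fin l, E (w i) = 0)
    (hEwT : ∀ (i : Fin l) (t : A), t ∈ T → E (w i * j t) = 0)
    (hEc : ∀ i : Fin l, E (c i) = 0)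
    (hEcj : ∀ (i : Fin l) (ξ : A), E (c i * j ξ) = 0)
    (hEccj : ∀ (i i' : Fin l) (ξ : A), E (c i * c i' * j ξ) = 0)
    (hEcw : ∀ i i' : Fin l, E (c i * w i') = 0)
    (hEcwj : ∀ (i i' : Fin l) (ξ : A), E (c i * w i' * j ξ) = 0)
    (hEww : ∀ i i' : Fin l, E (w i * w i') = 0)
    (hEwwj : ∀ (i i' : Fin l) (ξ : A), E (w i * w i' * j ξ) = 0)
    (hEhom : ∀ m : ℕ, m ≠ n → ∀ x ∈ ℬ m, E x = 0) :
    ∀ i : ℕ, n + 2 < i + (q + 2) → ∀ a : A, a ∈ Orphans ε → a ∈ 𝒜 i →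
      j a ∈ Orphans E := by
  let φ : 𝒜 →+*ᵍ ℬ := { (j : A →+* B) with map_mem := hjgr _ _ }
  have hmon (μ : MonIdx q l) := monomial_eq_one_or_exists_mem ℬ hcm hwm (fun _ ↦ q.le_succ)
    (fun _ ↦ le_rfl) μ.1
  intro i hi a ha hai
  exact orphans_persist_above_general ℬ φ.toRingHom hEj (fun m hm ↦ hEhom m hm.ne')
    (fun m hm x hx ↦ mem_range_of_mem_of_lt φ hmon (fun x ↦ (hfree x).exists) hm hx)
    (by lia) ha (hjgr i a hai)

end PDCDGA
end

section
/- For i ∈ {k−2, k−1, k}, Ô^i ∩ ker d̂ ⊆ O^i ∩ ker d: every cocycle orphan of Â in these degrees lies in A and is an orphan cocycle of A. -/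
namespace PDCDGA

variable {k : Type} [Field k]

/-!
Every element of `B` of degree less than `2 * q` is affine in the adjoined generators:
`x = j a + ∑ j (bₜ) cₜ + ∑ j (eₜ) wₜ`. In degrees at most `q + 2 < 2 * q` the coefficients `bₜ` have
degree at most `1`, so they are scalars `rₜ`, and are therefore closed. Since `D wₜ = cₜ - j γₜ`,
the coefficient of `cₜ` in `D x` is then `± eₜ`; hence `e = 0` when `x` is a cocycle, and what
remains of `D x = 0` is `d a + ∑ rₜ αₜ = 0`. The `cₜ` pair trivially with `j A`, so `a` is an orphan
of `A` whenever `x` is an orphan, and the independence of the `αₜ` modulo `d(O)` forces `r = 0`.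
-/

section GradedMonomials

lemma prod_pow_mem_graded {ι κ R σ : Type*} [AddMonoid ι] [Monoid R] [SetLike σ R] (ℬ : ι → σ)
    [SetLike.GradedMonoid ℬ] {c : κ → R} {p : ι} (hc : ∀ t, c t ∈ ℬ p) (s : κ → ℕ) (L : List κ) :
    (L.map fun t => c t ^ s t).prod ∈ ℬ ((L.map s).sum • p) := by
  induction L with
  | nil => simpa using SetLike.GradedOne.one_mem
  | cons t L ih =>
    simpa only [List.map_cons, List.prod_cons, List.sum_cons, add_nsmul] using
      SetLike.mul_mem_graded (SetLike.pow_mem_graded (s t) (hc t)) ih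

lemma monomial_mem_graded {ι σ : Type*} {R : Type} [AddMonoid ι] [Monoid R] [SetLike σ R]
    (ℬ : ι → σ) [SetLike.GradedMonoid ℬ] {l : ℕ} {c w : Fin l → R} {p r : ι}
    (hc : ∀ t, c t ∈ ℬ p) (hw : ∀ t, w t ∈ ℬ r) (μ : (Fin l → ℕ) × (Fin l → ℕ)) :
    monomial c w μ ∈ ℬ ((∑ t, μ.1 t) • p + (∑ t, μ.2 t) • r) := by
  rw [Fin.sum_univ_def, Fin.sum_univ_def]
  exact SetLike.mul_mem_graded (prod_pow_mem_graded ℬ hc μ.1 _) (prod_pow_mem_graded ℬ hw μ.2 _)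

lemma prod_finRange_pow_single {R : Type*} [Monoid R] {l : ℕ} (c : Fin l → R) (t : Fin l) :
    ((List.finRange l).map fun i => c i ^ (Pi.single t 1 : Fin l → ℕ) i).prod = c t := by
  rw [List.prod_map_eq_pow_single t _ fun i hi _ => by simp [hi]]
  simp [List.count_eq_one_of_mem (List.nodup_finRange l) (List.mem_finRange t)]

/-- The exponents of the monomials `1`, `c t` and `w t` of total degree at most one. -/
def affineExponent {l : ℕ} : Option (Fin l ⊕ Fin l) → (Fin l → ℕ) × (Fin l → ℕ)
  | none => (0, 0)
  | some (.inl t) => (Pi.single t 1, 0)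
  | some (.inr t) => (0, Pi.single t 1)

lemma affineExponent_injective {l : ℕ} : Function.Injective (affineExponent (l := l)) := by
  have single_injective : Function.Injective fun t : Fin l => (Pi.single t 1 : Fin l → ℕ) :=
    fun t t' h => by simpa [Pi.single_apply] using congrFun h t
  rintro (_ | t | t) (_ | t' | t') h <;>
    simp_all [affineExponent, single_injective.eq_iff, eq_comm (a := (0 : Fin l → ℕ))]

lemma monomial_affineExponent {R : Type} [Monoid R] {l : ℕ} (c w : Fin l → R)
    (o : Option (Fin l ⊕ Fin l)) :
    monomial c w (affineExponent o) = o.elim 1 (Sum.elim c w) := by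
  rcases o with _ | t | t <;> simp [monomial, affineExponent, prod_finRange_pow_single]

lemma degree_affineExponent {ι : Type*} [AddMonoid ι] {l : ℕ} (p r : ι)
    (o : Option (Fin l ⊕ Fin l)) :
    (∑ t, (affineExponent o).1 t) • p + (∑ t, (affineExponent o).2 t) • r =
      o.elim 0 (Sum.elim (fun _ => p) fun _ => r) := by
  rcases o with _ | t | t <;> simp [affineExponent]

lemma eq_single_of_sum_eq_one {ι : Type*} [Fintype ι] [DecidableEq ι] {s : ι → ℕ}
    (h : ∑ t, s t = 1) : ∃ t, s = Pi.single t 1 := by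
  obtain ⟨t, ht⟩ := (Finsupp.sum_eq_one_iff (Finsupp.equivFunOnFinite.symm s)).1 <| by
    rwa [Finsupp.sum_fintype _ _ fun _ => rfl]
  exact ⟨t, by rw [← Finsupp.single_eq_pi_single, ← ht]; rfl⟩

lemma exists_affineExponent_eq {l : ℕ} {μ : (Fin l → ℕ) × (Fin l → ℕ)}
    (h : ∑ t, μ.1 t + ∑ t, μ.2 t ≤ 1) : ∃ o, affineExponent o = μ := by
  have eq_zero {s : Fin l → ℕ} (hs : ∑ t, s t = 0) : s = 0 :=
    funext fun t => Finset.sum_eq_zero_iff.1 hs t (Finset.mem_univ t)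
  obtain ⟨s, e⟩ := μ
  have cases : (∑ t, s t = 0 ∧ ∑ t, e t = 0) ∨ (∑ t, s t = 1 ∧ ∑ t, e t = 0) ∨
      (∑ t, s t = 0 ∧ ∑ t, e t = 1) := by
    dsimp only at h
    lia
  rcases cases with ⟨hs, he⟩ | ⟨hs, he⟩ | ⟨hs, he⟩
  · exact ⟨none, by rw [eq_zero hs, eq_zero he]; rfl⟩
  · obtain ⟨t, rfl⟩ := eq_single_of_sum_eq_one hs
    exact ⟨some (.inl t), by rw [eq_zero he]; rfl⟩
  · obtain ⟨t, rfl⟩ := eq_single_of_sum_eq_one he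
    exact ⟨some (.inr t), by rw [eq_zero hs]; rfl⟩

/-- `affineExponent` with values in the index type of the monomial basis. -/
def affineIdx (q l : ℕ) : Option (Fin l ⊕ Fin l) ↪ MonIdx q l where
  toFun o := ⟨affineExponent o, by
    rcases o with _ | t | t <;> simp [affineExponent, Pi.single_apply, apply_ite (· ≤ 1)]⟩
  inj' _ _ h := affineExponent_injective (congrArg Subtype.val h)

lemma coe_affineIdx {q l : ℕ} (o : Option (Fin l ⊕ Fin l)) :
    (affineIdx q l o).1 = affineExponent o :=
  rfl

end GradedMonomials

section LeftCombinations

variable {R A B : Type*} [CommSemiring R] [Semiring A] [Algebra R A] [Semiring B] [Algebra R B]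

/-- The component of degree `i` of the graded module `𝒜` shifted up by `p`. It is zero for `i < p`,
where the truncated subtraction would otherwise give `𝒜 0`. -/
def shiftedComponent (𝒜 : ℕ → Submodule R A) (p i : ℕ) : Submodule R A :=
  if p ≤ i then 𝒜 (i - p) else ⊥

lemma shiftedComponent_of_le (𝒜 : ℕ → Submodule R A) {p i : ℕ} (h : p ≤ i) :
    shiftedComponent 𝒜 p i = 𝒜 (i - p) :=
  if_pos h

lemma shiftedComponent_of_lt (𝒜 : ℕ → Submodule R A) {p i : ℕ} (h : i < p) :
    shiftedComponent 𝒜 p i = ⊥ :=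
  if_neg h.not_ge

lemma shiftedComponent_le (𝒜 : ℕ → Submodule R A) (p i : ℕ) :
    shiftedComponent 𝒜 p i ≤ 𝒜 (i - p) := by
  unfold shiftedComponent
  split_ifs
  exacts [le_rfl, bot_le]

/-- The combination `∑ i, j (f i) * v i` of a family `v` in `B` with coefficients in `A`, which acts
on `B` from the left through `j`. -/
noncomputable def leftCombination {ι : Type*} (j : A →ₐ[R] B) (v : ι → B) : (ι →₀ A) →ₗ[R] B :=
  Finsupp.lsum R fun i => LinearMap.mulRight R (v i) ∘ₗ j.toLinearMap

lemma leftCombination_apply {ι : Type*} (j : A →ₐ[R] B) (v : ι → B) (f : ι →₀ A) :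
    leftCombination j v f = f.sum fun i a => j a * v i :=
  rfl

lemma leftCombination_comp_injective {ι κ : Type*} {j : A →ₐ[R] B} {v : ι → B}
    (h : Function.Injective (leftCombination j v)) (σ : κ ↪ ι) :
    Function.Injective (leftCombination j (v ∘ σ)) := by
  have comp_eq : ⇑(leftCombination j (v ∘ σ)) = leftCombination j v ∘ Finsupp.embDomain σ := by
    funext f
    simp only [Function.comp_apply, leftCombination_apply, Finsupp.sum_embDomain]
  rw [comp_eq]
  exact h.comp (Finsupp.embDomain_injective σ)

lemma decompose_map_mul_mem (𝒜 : ℕ → Submodule R A) [GradedRing 𝒜] (ℬ : ℕ → Submodule R B)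
    [GradedRing ℬ] {j : A →ₐ[R] B} (hj : ∀ i, ∀ a ∈ 𝒜 i, j a ∈ ℬ i) {p : ℕ} {v : B} (hv : v ∈ ℬ p)
    (a : A) (i : ℕ) :
    (DirectSum.decompose ℬ (j a * v) i : B) ∈
      (shiftedComponent 𝒜 p i).map (LinearMap.mulRight R v ∘ₗ j.toLinearMap) := by
  let J : 𝒜 →+*ᵍ ℬ := { j.toRingHom with map_mem := fun {i} {a} => hj i a }
  rcases le_or_gt p i with hpi | hip
  · rw [DirectSum.coe_decompose_mul_of_right_mem_of_le ℬ hv hpi, shiftedComponent_of_le 𝒜 hpi]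
    exact ⟨DirectSum.decompose 𝒜 a (i - p), SetLike.coe_mem _,
      congrArg (· * v) J.map_directSumDecompose⟩
  · rw [DirectSum.coe_decompose_mul_of_right_mem_of_not_le ℬ hv hip.not_ge]
    exact zero_mem _

lemma graded_le_iSup_map_of_leftCombination_surjective {ι : Type*} (𝒜 : ℕ → Submodule R A)
    [GradedRing 𝒜] (ℬ : ℕ → Submodule R B) [GradedRing ℬ] {j : A →ₐ[R] B}
    (hj : ∀ i, ∀ a ∈ 𝒜 i, j a ∈ ℬ i) {v : ι → B} {δ : ι → ℕ} (hv : ∀ μ, v μ ∈ ℬ (δ μ))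
    (hsurj : Function.Surjective (leftCombination j v)) (i : ℕ) :
    ℬ i ≤ ⨆ μ, (shiftedComponent 𝒜 (δ μ) i).map (LinearMap.mulRight R (v μ) ∘ₗ j.toLinearMap) := by
  intro x hx
  obtain ⟨f, rfl⟩ := hsurj x
  rw [← DirectSum.decompose_of_mem_same ℬ hx, ← GradedRing.proj_apply, leftCombination_apply,
    Finsupp.sum, map_sum]
  exact sum_mem fun μ _ => Submodule.mem_iSup_of_mem μ (decompose_map_mul_mem 𝒜 ℬ hj (hv μ) _ i)

/-- The affine polynomial `j a + ∑ t, j (b t) * c t + ∑ t, j (e t) * w t` in the generators `c`,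
`w`, as a function of its coefficients `(a, b, e)`. -/
def affinePoly {ι : Type*} [Fintype ι] (j : A →ₐ[R] B) (c w : ι → B) :
    A × (ι → A) × (ι → A) →ₗ[R] B :=
  j.toLinearMap.coprod <|
    (∑ t, LinearMap.mulRight R (c t) ∘ₗ j.toLinearMap ∘ₗ LinearMap.proj t).coprod
      (∑ t, LinearMap.mulRight R (w t) ∘ₗ j.toLinearMap ∘ₗ LinearMap.proj t)

lemma affinePoly_apply {ι : Type*} [Fintype ι] (j : A →ₐ[R] B) (c w : ι → B) (a : A) (b e : ι → A) :
    affinePoly j c w (a, b, e) = j a + (∑ t, j (b t) * c t + ∑ t, j (e t) * w t) := by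
  simp [affinePoly]

/-- The coefficients `(a, b, e)` for which `affinePoly` is homogeneous of degree `i`, when the
generators `c` have degree `p` and the generators `w` have degree `r`. -/
def affineCoeffs (𝒜 : ℕ → Submodule R A) (ι : Type*) (p r i : ℕ) :
    Submodule R (A × (ι → A) × (ι → A)) :=
  (𝒜 i).prod <| (Submodule.pi Set.univ fun _ => shiftedComponent 𝒜 p i).prod
    (Submodule.pi Set.univ fun _ => shiftedComponent 𝒜 r i)

lemma mem_affineCoeffs {𝒜 : ℕ → Submodule R A} {ι : Type*} {p r i : ℕ} {a : A} {b e : ι → A} :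
    (a, b, e) ∈ affineCoeffs 𝒜 ι p r i ↔
      a ∈ 𝒜 i ∧ (∀ t, b t ∈ shiftedComponent 𝒜 p i) ∧ ∀ t, e t ∈ shiftedComponent 𝒜 r i := by
  simp [affineCoeffs, Submodule.mem_pi]

lemma mul_elim_mem_map_affinePoly {𝒜 : ℕ → Submodule R A} {ι : Type*} [Fintype ι] (j : A →ₐ[R] B)
    (c w : ι → B) {p r i : ℕ} (o : Option (ι ⊕ ι)) {a : A}
    (ha : a ∈ shiftedComponent 𝒜 (o.elim 0 (Sum.elim (fun _ => p) fun _ => r)) i) :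
    j a * o.elim 1 (Sum.elim c w) ∈ (affineCoeffs 𝒜 ι p r i).map (affinePoly j c w) := by
  classical
  have single_mem {S : Submodule R A} (ha : a ∈ S) (t t' : ι) : (Pi.single t a : ι → A) t' ∈ S := by
    rw [Pi.single_apply]
    split_ifs
    exacts [ha, zero_mem S]
  rcases o with _ | t | t
  · refine ⟨(a, 0, 0), mem_affineCoeffs.2 ⟨?_, ?_, ?_⟩, ?_⟩ <;>
      simp_all [affinePoly_apply, shiftedComponent]
  · refine ⟨(0, Pi.single t a, 0), mem_affineCoeffs.2 ⟨?_, single_mem ha t, ?_⟩, ?_⟩ <;>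
      simp [affinePoly_apply, Pi.single_apply, apply_ite j, ite_mul]
  · refine ⟨(0, 0, Pi.single t a), mem_affineCoeffs.2 ⟨?_, ?_, single_mem ha t⟩, ?_⟩ <;>
      simp [affinePoly_apply, Pi.single_apply, apply_ite j, ite_mul]

end LeftCombinations

section AffinePolynomials

variable {R A : Type*} {B : Type} [CommSemiring R] [Semiring A] [Algebra R A] [Semiring B]
  [Algebra R B] {q l : ℕ} {j : A →ₐ[R] B} {c w : Fin l → B}

lemma affinePoly_injective
    (hindep : Function.Injective (leftCombination j fun μ : MonIdx q l => monomial c w μ.1)) :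
    Function.Injective (affinePoly j c w) := by
  rintro ⟨a, b, e⟩ ⟨a', b', e'⟩ h
  let coeffs (a : A) (b e : Fin l → A) : Option (Fin l ⊕ Fin l) →₀ A :=
    Finsupp.equivFunOnFinite.symm fun o => o.elim a (Sum.elim b e)
  have affinePoly_eq (a : A) (b e : Fin l → A) : affinePoly j c w (a, b, e) =
      leftCombination j ((fun μ : MonIdx q l => monomial c w μ.1) ∘ affineIdx q l)
        (coeffs a b e) := by
    rw [leftCombination_apply, Finsupp.sum_fintype _ _ (by simp)]
    simp [coeffs, affinePoly_apply, coe_affineIdx, monomial_affineExponent]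
  rw [affinePoly_eq, affinePoly_eq] at h
  have coeffs_eq := leftCombination_comp_injective hindep (affineIdx q l) h
  have apply_eq (o) : coeffs a b e o = coeffs a' b' e' o := DFunLike.congr_fun coeffs_eq o
  simp only [Prod.mk.injEq]
  exact ⟨apply_eq none, funext fun t => apply_eq (some (.inl t)),
    funext fun t => apply_eq (some (.inr t))⟩

lemma graded_le_map_affinePoly (𝒜 : ℕ → Submodule R A) [GradedRing 𝒜] (ℬ : ℕ → Submodule R B)
    [GradedRing ℬ] (hj : ∀ i, ∀ a ∈ 𝒜 i, j a ∈ ℬ i) (hc : ∀ t, c t ∈ ℬ (q + 1))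
    (hw : ∀ t, w t ∈ ℬ q)
    (hspan : Function.Surjective (leftCombination j fun μ : MonIdx q l => monomial c w μ.1))
    {i : ℕ} (hi : i < 2 * q) :
    ℬ i ≤ (affineCoeffs 𝒜 (Fin l) (q + 1) q i).map (affinePoly j c w) := by
  refine (graded_le_iSup_map_of_leftCombination_surjective 𝒜 ℬ hj
    (fun μ : MonIdx q l => monomial_mem_graded ℬ hc hw μ.1) hspan i).trans (iSup_le ?_)
  rintro ⟨μ, -⟩
  rcases lt_or_ge i ((∑ t, μ.1 t) • (q + 1) + (∑ t, μ.2 t) • q) with hlt | hge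
  · rw [shiftedComponent_of_lt 𝒜 hlt, Submodule.map_bot]
    exact bot_le
  · have total_le_one : ∑ t, μ.1 t + ∑ t, μ.2 t ≤ 1 := by
      by_contra! hcon
      refine hi.not_ge ?_
      calc 2 * q ≤ (∑ t, μ.1 t + ∑ t, μ.2 t) * q := Nat.mul_le_mul_right q hcon
        _ ≤ (∑ t, μ.1 t) • (q + 1) + (∑ t, μ.2 t) • q := by
          rw [add_mul, smul_eq_mul, smul_eq_mul]
          gcongr
          exact q.le_succ
        _ ≤ i := hge
    obtain ⟨o, rfl⟩ := exists_affineExponent_eq total_le_one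
    rintro _ ⟨a, ha, rfl⟩
    rw [degree_affineExponent] at ha
    rw [monomial_affineExponent]
    exact mul_elim_mem_map_affinePoly j c w o ha

end AffinePolynomials

section Cocycles

variable {A B : Type} [Ring A] [Algebra k A] [Ring B] [Algebra k B]

lemma IsDifferential.map_one {𝒜 : ℕ → Submodule k A} [SetLike.GradedOne 𝒜] {d : A →ₗ[k] A}
    (hd : IsDifferential 𝒜 d) : d 1 = 0 := by
  simpa using hd.leibniz 0 1 1 SetLike.GradedOne.one_mem

lemma exists_eq_smul_one_of_mem_shiftedComponent {𝒜 : ℕ → Submodule k A}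
    (hconn : ∀ a ∈ 𝒜 0, ∃ r : k, a = r • (1 : A)) (h1 : 𝒜 1 = ⊥) {p i : ℕ} (hi : i ≤ p + 1)
    {b : A} (hb : b ∈ shiftedComponent 𝒜 p i) : ∃ r : k, b = r • (1 : A) ∧ (i ≠ p → r = 0) := by
  rcases lt_trichotomy i p with hlt | rfl | hgt
  · rw [shiftedComponent_of_lt 𝒜 hlt, Submodule.mem_bot] at hb
    exact ⟨0, by simp [hb]⟩
  · rw [shiftedComponent_of_le 𝒜 le_rfl, Nat.sub_self] at hb
    obtain ⟨r, hr⟩ := hconn b hb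
    exact ⟨r, hr, fun h => absurd rfl h⟩
  · rw [shiftedComponent_of_le 𝒜 hgt.le, show i - p = 1 by lia, h1, Submodule.mem_bot] at hb
    exact ⟨0, by simp [hb]⟩

variable {𝒜 : ℕ → Submodule k A} {ℬ : ℕ → Submodule k B} {d : A →ₗ[k] A} {D : B →ₗ[k] B}
  {ι : Type*} [Fintype ι] {α γ : ι → A} {j : A →ₐ[k] B} {c w : ι → B}

lemma IsDifferential.map_affinePoly (hD : IsDifferential ℬ D) (hj : ∀ i, ∀ a ∈ 𝒜 i, j a ∈ ℬ i)
    (hjd : ∀ a, D (j a) = j (d a)) (hDc : ∀ t, D (c t) = j (α t))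
    (hDw : ∀ t, D (w t) = c t - j (γ t)) {p m : ℕ} (a : A) {b e : ι → A} (hb : ∀ t, b t ∈ 𝒜 p)
    (he : ∀ t, e t ∈ 𝒜 m) :
    D (affinePoly j c w (a, b, e)) = affinePoly j c w
      (d a + ((-1 : k) ^ p • ∑ t, b t * α t - (-1 : k) ^ m • ∑ t, e t * γ t),
        fun t => d (b t) + (-1 : k) ^ m • e t, fun t => d (e t)) := by
  have hDbc (t : ι) : D (j (b t) * c t) =
      j (d (b t)) * c t + (-1 : k) ^ p • j (b t * α t) := by
    rw [hD.leibniz p _ _ (hj p _ (hb t)), hjd, hDc, map_mul]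
  have hDew (t : ι) : D (j (e t) * w t) =
      j (d (e t)) * w t + (-1 : k) ^ m • (j (e t) * c t - j (e t * γ t)) := by
    rw [hD.leibniz m _ _ (hj m _ (he t)), hjd, hDw, map_mul, mul_sub]
  simp only [affinePoly_apply, map_add, map_sub, map_sum, map_smul, hjd, hDbc, hDew, add_mul,
    smul_mul_assoc, Finset.sum_add_distrib, Finset.sum_sub_distrib, smul_sub, Finset.smul_sum]
  abel

lemma coeffs_of_map_affinePoly_eq_zero [SetLike.GradedOne 𝒜] (hd : IsDifferential 𝒜 d)
    (hD : IsDifferential ℬ D) (hj : ∀ i, ∀ a ∈ 𝒜 i, j a ∈ ℬ i) (hjd : ∀ a, D (j a) = j (d a))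
    (hDc : ∀ t, D (c t) = j (α t)) (hDw : ∀ t, D (w t) = c t - j (γ t))
    (hinj : Function.Injective (affinePoly j c w)) {m : ℕ} {a : A} {r : ι → k} {e : ι → A}
    (he : ∀ t, e t ∈ 𝒜 m) (hx : D (affinePoly j c w (a, fun t => r t • 1, e)) = 0) :
    e = 0 ∧ d a + ∑ t, r t • α t = 0 := by
  have hr (t : ι) : r t • (1 : A) ∈ 𝒜 0 := Submodule.smul_mem _ _ SetLike.GradedOne.one_mem
  rw [hD.map_affinePoly hj hjd hDc hDw a hr he, map_eq_zero_iff _ hinj] at hx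
  obtain ⟨hconst, hcoeff_c, -⟩ : _ ∧ _ ∧ _ := by simpa only [Prod.mk_eq_zero] using hx
  have he0 : e = 0 := by
    funext t
    simpa [hd.map_one] using congrFun hcoeff_c t
  exact ⟨he0, by simpa [he0] using hconst⟩

lemma mem_orphans_of_map_add_mem {ε : A →ₗ[k] k} {E : B →ₗ[k] k} (hEj : ∀ a, E (j a) = ε a)
    {a : A} {y : B} (hy : ∀ ξ, E (y * j ξ) = 0) (h : j a + y ∈ Orphans E) : a ∈ Orphans ε := by
  rw [mem_orphans] at h ⊢
  intro ξ
  simpa [add_mul, ← map_mul, hEj, hy] using h (j ξ)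

end Cocycles

theorem hat_orphan_cocycles_come_from_A_general {k A B : Type} [Field k] [Ring A] [Algebra k A]
    [Ring B] [Algebra k B]
    (𝒜 : ℕ → Submodule k A) [GradedRing 𝒜] (ℬ : ℕ → Submodule k B) [GradedRing ℬ]
    (d : A →ₗ[k] A) (D : B →ₗ[k] B) (q l : ℕ) (ε : A →ₗ[k] k) (E : B →ₗ[k] k)
    (hdA : IsDifferential 𝒜 d) (hdB : IsDifferential ℬ D)
    (hconn : ∀ a ∈ 𝒜 0, ∃ r : k, a = r • (1 : A)) (h1 : 𝒜 1 = ⊥) (hq : 3 ≤ q)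
    (α γ : Fin l → A)
    (hind : ∀ (cf : Fin l → k) (b : A), b ∈ Orphans ε → b ∈ 𝒜 (q + 1) →
      (∑ i, cf i • α i) = d b → ∀ i, cf i = 0)
    (j : A →ₐ[k] B) (hjgr : ∀ i : ℕ, ∀ a ∈ 𝒜 i, j a ∈ ℬ i) (hjch : ∀ a : A, D (j a) = j (d a))
    (c w : Fin l → B) (hcm : ∀ i, c i ∈ ℬ (q + 1)) (hwm : ∀ i, w i ∈ ℬ q)
    (hDc : ∀ i, D (c i) = j (α i)) (hDw : ∀ i, D (w i) = c i - j (γ i))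
    (hfree : Function.Bijective (leftCombination j fun μ : MonIdx q l => monomial c w μ.1))
    (hEj : ∀ a : A, E (j a) = ε a) (hEcj : ∀ (i : Fin l) (ξ : A), E (c i * j ξ) = 0)
    (i : ℕ) (hi : i ≤ q + 2) (x : B) (hxo : x ∈ Orphans E) (hx : x ∈ ℬ i) (hDx : D x = 0) :
    ∃ a : A, a ∈ Orphans ε ∧ a ∈ 𝒜 i ∧ d a = 0 ∧ x = j a := by
  obtain ⟨⟨a, b, e⟩, hcoeffs, rfl⟩ :=
    graded_le_map_affinePoly 𝒜 ℬ hjgr hcm hwm hfree.surjective (by lia) hx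
  obtain ⟨ha, hb, he⟩ := mem_affineCoeffs.1 hcoeffs
  choose r hbr hr using fun t => exists_eq_smul_one_of_mem_shiftedComponent hconn h1 hi (hb t)
  obtain rfl : b = fun t => r t • 1 := funext hbr
  obtain ⟨rfl, hda⟩ := coeffs_of_map_affinePoly_eq_zero hdA hdB hjgr hjch hDc hDw
    (affinePoly_injective hfree.injective) (fun t => shiftedComponent_le 𝒜 q i (he t)) hDx
  have hx_eq : affinePoly j c w (a, fun t => r t • 1, 0) = j a + ∑ t, r t • c t := by
    simp [affinePoly_apply]
  have hao : a ∈ Orphans ε := by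
    refine mem_orphans_of_map_add_mem hEj (fun ξ => ?_) (hx_eq ▸ hxo)
    simp [Finset.sum_mul, hEcj]
  have hr0 (t : Fin l) : r t = 0 := by
    by_cases hiq : i = q + 1
    · subst hiq
      refine hind r (-a) (neg_mem hao) (neg_mem ha) ?_ t
      rw [map_neg, eq_neg_of_add_eq_zero_right hda]
    · exact hr t hiq
  exact ⟨a, hao, ha, by simpa [hr0] using hda, hx_eq.trans (by simp [hr0])⟩

/-- for `i ∈ {k−2, k−1, k}` (with `k = q+2`), every cocycle orphan
of `Â` of degree `i` lies in `A` and is an orphan cocycle of `A`. -/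
theorem hat_orphan_cocycles_come_from_A {k A B : Type} [Field k] [Ring A] [Algebra k A] [Ring B] [Algebra k B]
    (𝒜 : ℕ → Submodule k A) [GradedRing 𝒜] (ℬ : ℕ → Submodule k B) [GradedRing ℬ]
    (d : A →ₗ[k] A) (D : B →ₗ[k] B) (n q l : ℕ)
    (ε : A →ₗ[k] k) (E : B →ₗ[k] k)
    (hgcA : GradedComm 𝒜) (hdA : IsDifferential 𝒜 d)
    (hgcB : GradedComm ℬ) (hdB : IsDifferential ℬ D)
    (hft : ∀ i : ℕ, FiniteDimensional k (𝒜 i))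
    (hconn : ∀ a ∈ 𝒜 0, ∃ r : k, a = r • (1 : A))
    (h1 : 𝒜 1 = ⊥) (h2 : ∀ a ∈ 𝒜 2, d a = 0)
    (hn : 7 ≤ n) (hk : n + 2 ≤ 2 * (q + 2))
    (hor : IsOrientation 𝒜 d n ε) (hpd : CohomologyPD 𝒜 d n ε)
    (α γ : Fin l → A)
    (hαm : ∀ i, α i ∈ 𝒜 (q + 2)) (hαz : ∀ i, d (α i) = 0) (hαo : ∀ i, α i ∈ Orphans ε)
    (hspan : ∀ a : A, a ∈ Orphans ε → a ∈ 𝒜 (q + 2) → d a = 0 →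
      ∃ (b : A) (cf : Fin l → k), b ∈ Orphans ε ∧ b ∈ 𝒜 (q + 1) ∧ a = d b + ∑ i, cf i • α i)
    (hind : ∀ (cf : Fin l → k) (b : A), b ∈ Orphans ε → b ∈ 𝒜 (q + 1) →
      (∑ i, cf i • α i) = d b → ∀ i, cf i = 0)
    (hγm : ∀ i, γ i ∈ 𝒜 (q + 1)) (hγd : ∀ i, d (γ i) = α i)
    (hγperp : ∀ (i : Fin l) (z : A), d z = 0 → ε (γ i * z) = 0)
    (T Z : Submodule k A)
    (hT : IsCompl T (LinearMap.range d)) (hγT : ∀ i, γ i ∈ T)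
    (hZo : Z ≤ Orphans ε)
    (hZdisj : Z ⊓ (Orphans ε ⊓ LinearMap.range d) = ⊥)
    (hZsup : Z ⊔ (Orphans ε ⊓ LinearMap.range d) = Orphans ε)
    (hZT : Z ≤ T)
    (hZgr : ∀ z ∈ Z, ∀ i : ℕ, ((DirectSum.decompose 𝒜 z i : 𝒜 i) : A) ∈ Z)
    (j : A →ₐ[k] B) (hjgr : ∀ i : ℕ, ∀ a ∈ 𝒜 i, j a ∈ ℬ i)
    (hjch : ∀ a : A, D (j a) = j (d a))
    (c w : Fin l → B) (hcm : ∀ i, c i ∈ ℬ (q + 1)) (hwm : ∀ i, w i ∈ ℬ q)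
    (hDc : ∀ i, D (c i) = j (α i)) (hDw : ∀ i, D (w i) = c i - j (γ i))
    (hcase : CharZero k ∨ Odd (q + 2))
    (hfree : ∀ x : B, ∃! f : MonIdx q l →₀ A,
      (f.sum fun μ a => j a * monomial c w μ.1) = x)
    (hEj : ∀ a : A, E (j a) = ε a)
    (hEwd : ∀ (i : Fin l) (ξ : A), E (w i * j (d ξ)) = ((-1 : k) ^ (q + 2)) * ε (γ i * ξ))
    (hEcc : ∀ i i' : Fin l, E (c i * c i') = - ε (γ i * γ i'))
    (hEw : ∀ i : Fin l, E (w i) = 0)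
    (hEwT : ∀ (i : Fin l) (t : A), t ∈ T → E (w i * j t) = 0)
    (hEc : ∀ i : Fin l, E (c i) = 0)
    (hEcj : ∀ (i : Fin l) (ξ : A), E (c i * j ξ) = 0)
    (hEccj : ∀ (i i' : Fin l) (ξ : A), E (c i * c i' * j ξ) = 0)
    (hEcw : ∀ i i' : Fin l, E (c i * w i') = 0)
    (hEcwj : ∀ (i i' : Fin l) (ξ : A), E (c i * w i' * j ξ) = 0)
    (hEww : ∀ i i' : Fin l, E (w i * w i') = 0)
    (hEwwj : ∀ (i i' : Fin l) (ξ : A), E (w i * w i' * j ξ) = 0)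
    (hEhom : ∀ m : ℕ, m ≠ n → ∀ x ∈ ℬ m, E x = 0) :
    ∀ i : ℕ, (i = q ∨ i = q + 1 ∨ i = q + 2) →
      ∀ x : B, x ∈ Orphans E → x ∈ ℬ i → D x = 0 →
        ∃ a : A, a ∈ Orphans ε ∧ a ∈ 𝒜 i ∧ d a = 0 ∧ x = j a := by
  intro i hi x
  exact hat_orphan_cocycles_come_from_A_general 𝒜 ℬ d D q l ε E hdA hdB hconn h1 (by lia) α γ hind
    j hjgr hjch c w hcm hwm hDc hDw ((Function.bijective_iff_existsUnique _).2 hfree) hEj hEcj i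
    (by lia) x

end PDCDGA
end

section
/- If n is even and k = n/2 + 1, then the bilinear form Γ ⊗ Γ → k, γ ⊗ γ' ↦ ε(γγ') is non-degenerate on Γ = ⟨γ_1,…,γ_l⟩ ⊆ A^{n/2}. -/
namespace PDCDGA

variable {k : Type} [Field k]

/-!
Write `m = n / 2` and let `O` be the orphan ideal. The form `ε (a * b)` induces a nondegenerate
pairing on `A/O`, for which `d` is self-adjoint up to sign, so the annihilator of the boundaries
consists of cocycles. An element orthogonal to all cocycles thus lies in the double annihilator
of the boundaries; these being finite-dimensional, it is itself a boundary. In other words, the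
pairing on `H^*(A/O)` is nondegenerate. The sequence `0 → H^m(A) → H^m(A/O) → H^{m+1}(O) → 0` is
split by `α_i ↦ γ_i`, and `Γ` is orthogonal to `ker d`. So `H^m(A/O)` is the orthogonal sum of
`H^m(A)` and `Γ`, and each summand of a nondegenerate orthogonal sum is nondegenerate.
-/

section LinearAlgebra

variable {K V W : Type*} [Field K] [AddCommGroup V] [Module K V] [AddCommGroup W] [Module K W]

lemma exists_mem_apply_eq_of_forall_apply_eq_zero_s12 (B : V →ₗ[K] W →ₗ[K] K) (U : Submodule K V)
    [FiniteDimensional K U] {v : V} (hv : ∀ w, (∀ u ∈ U, B u w = 0) → B v w = 0) :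
    ∃ u ∈ U, B u = B v := by
  suffices B v ∈ U.map B from this
  rw [← Subspace.dualCoannihilator_dualAnnihilator_eq (W := U.map B),
    Submodule.mem_dualAnnihilator]
  intro w hw
  rw [Submodule.mem_dualCoannihilator] at hw
  exact hv w fun u hu => hw (B u) (Submodule.mem_map_of_mem hu)

variable {ι : Type*} [Fintype ι] {f : V →ₗ[K] W} {P : Submodule K V} {v : ι → V}

lemma mem_sup_span_range_sup_ker {x b : V} {c : ι → K} (hb : b ∈ P)
    (hx : f x = f b + ∑ i, c i • f (v i)) :
    x ∈ P ⊔ Submodule.span K (Set.range v) ⊔ LinearMap.ker f := by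
  have hsum : ∑ i, c i • v i ∈ Submodule.span K (Set.range v) :=
    (Submodule.mem_span_range_iff_exists_fun K).2 ⟨c, rfl⟩
  refine Submodule.mem_sup.2 ⟨b + ∑ i, c i • v i, Submodule.add_mem_sup hb hsum,
    x - (b + ∑ i, c i • v i), ?_, add_sub_cancel _ _⟩
  simp [hx]

lemma disjoint_span_range_sup_ker_s12
    (hind : ∀ c : ι → K, ∀ b ∈ P, ∑ i, c i • f (v i) = f b → ∀ i, c i = 0) :
    Disjoint (Submodule.span K (Set.range v)) (P ⊔ LinearMap.ker f) := by
  rw [Submodule.disjoint_def]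
  intro x hx hxP
  obtain ⟨c, rfl⟩ := (Submodule.mem_span_range_iff_exists_fun K).1 hx
  obtain ⟨b, hb, z, hz, hbz⟩ := Submodule.mem_sup.1 hxP
  have hc : ∀ i, c i = 0 := hind c b hb <| by
    simpa [LinearMap.mem_ker.1 hz] using congrArg f hbz.symm
  simp [hc]

end LinearAlgebra

section Orientation

variable {A : Type} [Ring A] [Algebra k A] {𝒜 : ℕ → Submodule k A} {d : A →ₗ[k] A}
  {n : ℕ} {ε : A →ₗ[k] k}

lemma map_mul_eq_zero_of_mem_span {s : Set A} {z : A} (hs : ∀ x ∈ s, ε (x * z) = 0) :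
    ∀ g ∈ Submodule.span k s, ε (g * z) = 0 :=
  Submodule.span_le (p := LinearMap.ker (ε ∘ₗ LinearMap.mulRight k z)).2 hs

lemma GradedComm.map_mul_eq_zero_comm (hgc : GradedComm 𝒜) {i j : ℕ} {a b : A}
    (ha : a ∈ 𝒜 i) (hb : b ∈ 𝒜 j) : ε (a * b) = 0 ↔ ε (b * a) = 0 := by
  simp [hgc.mul_comm i j a b ha hb]

lemma IsOrientation.map_d_mul_eq_zero_iff (hor : IsOrientation 𝒜 d n ε)
    (hd : IsDifferential 𝒜 d) {i : ℕ} {a : A} (ha : a ∈ 𝒜 i) (b : A) :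
    ε (d a * b) = 0 ↔ ε (a * d b) = 0 := by
  have hsum : ε (d a * b) + (-1) ^ i * ε (a * d b) = 0 := by
    simpa [hd.leibniz i a b ha] using hor.eps_d (a * b)
  simp [eq_neg_of_add_eq_zero_left hsum]

variable [GradedRing 𝒜]

lemma IsOrientation.mem_orphans_of_forall_mem (hor : IsOrientation 𝒜 d n ε) {i j : ℕ}
    (hn : i + j = n) {a : A} (ha : a ∈ 𝒜 i) (h : ∀ x ∈ 𝒜 j, ε (a * x) = 0) :
    a ∈ Orphans ε := by
  rw [mem_orphans]
  intro b
  induction b using DirectSum.Decomposition.inductionOn 𝒜 with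
  | zero => simp
  | @homogeneous t b =>
    obtain rfl | ht := eq_or_ne t j
    · exact h b b.2
    · exact hor.homog (i + t) (by lia) _ (SetLike.mul_mem_graded ha b.2)
  | add b c hb hc => rw [mul_add, map_add, hb, hc, add_zero]

lemma IsOrientation.d_mem_orphans (hor : IsOrientation 𝒜 d n ε) (hgc : GradedComm 𝒜)
    (hd : IsDifferential 𝒜 d) {p j : ℕ} (hn : p + 1 + j = n) {x : A} (hx : x ∈ 𝒜 j)
    (h : ∀ y ∈ 𝒜 p, ε (d y * x) = 0) : d x ∈ Orphans ε := by
  have hdx : d x ∈ 𝒜 (j + 1) := hd.grade j x hx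
  refine hor.mem_orphans_of_forall_mem (by lia : j + 1 + p = n) hdx fun y hy => ?_
  rw [hgc.map_mul_eq_zero_comm hdx hy, ← hor.map_d_mul_eq_zero_iff hd hy]
  exact h y hy

/-- Nondegeneracy of the pairing on `H^*(A/O)`: the elements `x` with `d x ∈ O` represent the
cocycles of `A/O`, and the conclusion says that `g` represents a boundary of `A/O`. -/
theorem IsOrientation.mem_orphans_sup_boundaries (hor : IsOrientation 𝒜 d n ε)
    (hgc : GradedComm 𝒜) (hd : IsDifferential 𝒜 d) {p j : ℕ} (hn : p + 1 + j = n)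
    [FiniteDimensional k ((𝒜 p).map d)] {g : A} (hg : g ∈ 𝒜 (p + 1))
    (hperp : ∀ x ∈ 𝒜 j, d x ∈ Orphans ε → ε (g * x) = 0) :
    g ∈ (Orphans ε ⊓ 𝒜 (p + 1)) ⊔ (𝒜 p).map d := by
  let pairing : A →ₗ[k] 𝒜 j →ₗ[k] k :=
    ((LinearMap.mul k A).compr₂ ε).compl₂ (𝒜 j).subtype
  obtain ⟨_, ⟨y, hy, rfl⟩, hyg⟩ : ∃ u ∈ (𝒜 p).map d, pairing u = pairing g :=
    exists_mem_apply_eq_of_forall_apply_eq_zero_s12 pairing _ fun x hx =>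
      hperp x x.2 <| hor.d_mem_orphans hgc hd hn x.2 fun y hy =>
        hx (d y) (Submodule.mem_map_of_mem hy)
  have hdeg : g - d y ∈ 𝒜 (p + 1) := sub_mem hg (hd.grade p y hy)
  have horphan : g - d y ∈ Orphans ε := hor.mem_orphans_of_forall_mem hn hdeg fun x hx => by
    have hpair : ε (d y * x) = ε (g * x) := LinearMap.congr_fun hyg ⟨x, hx⟩
    rw [sub_mul, map_sub, hpair, sub_self]
  exact Submodule.mem_sup.2
    ⟨g - d y, ⟨horphan, hdeg⟩, d y, Submodule.mem_map_of_mem hy, sub_add_cancel _ _⟩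

/-- With `m = q + 1`, `hspan` and `hdisj` say that `Γ` maps isomorphically onto a complement of
the image of `H^m(A)` in `H^m(A/O)`. -/
theorem gamma_pairing_nondegenerate_general (hgc : GradedComm 𝒜) (hd : IsDifferential 𝒜 d)
    (hor : IsOrientation 𝒜 d n ε) {q : ℕ} (hn : n = 2 * q + 2)
    [FiniteDimensional k ((𝒜 q).map d)] {Γ : Submodule k A} (hΓ : Γ ≤ 𝒜 (q + 1))
    (hΓperp : ∀ z, d z = 0 → ∀ g ∈ Γ, ε (g * z) = 0)
    (hspan : ∀ x ∈ 𝒜 (q + 1), d x ∈ Orphans ε →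
      x ∈ (Orphans ε ⊓ 𝒜 (q + 1)) ⊔ Γ ⊔ LinearMap.ker d)
    (hdisj : Disjoint Γ ((Orphans ε ⊓ 𝒜 (q + 1)) ⊔ LinearMap.ker d)) :
    ∀ g ∈ Γ, g ≠ 0 → ∃ g' ∈ Γ, ε (g * g') ≠ 0 := by
  intro g hg
  contrapose!
  intro hgΓ
  have hperp : ∀ x ∈ 𝒜 (q + 1), d x ∈ Orphans ε → ε (g * x) = 0 := by
    intro x hx hdx
    obtain ⟨_, hbγ, z, hz, rfl⟩ := Submodule.mem_sup.1 (hspan x hx hdx)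
    obtain ⟨b, ⟨hbO, hb⟩, γ, hγ, rfl⟩ := Submodule.mem_sup.1 hbγ
    have hgb : ε (g * b) = 0 :=
      (hgc.map_mul_eq_zero_comm hb (hΓ hg)).1 ((mem_orphans ε b).1 hbO g)
    simp only [mul_add, map_add, hgb, hgΓ γ hγ, hΓperp z hz g hg, add_zero]
  have hboundary : g ∈ (Orphans ε ⊓ 𝒜 (q + 1)) ⊔ (𝒜 q).map d :=
    hor.mem_orphans_sup_boundaries hgc hd (by lia) (hΓ hg) hperp
  have hle : (𝒜 q).map d ≤ LinearMap.ker d :=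
    Submodule.map_le_iff_le_comap.2 fun y _ => hd.d_sq y
  exact Submodule.disjoint_def.1 hdisj g hg (sup_le_sup_left hle _ hboundary)

end Orientation

/-- if `n` is even and `k = n/2 + 1` (i.e. `n = 2q + 2` with
`k = q + 2`), the bilinear form `Γ ⊗ Γ → k`, `γ ⊗ γ' ↦ ε(γγ')` is non-degenerate
on `Γ = ⟨γ₁,…,γ_l⟩ ⊆ A^{n/2}`. -/
theorem gamma_pairing_nondegenerate {k A : Type} [Field k] [Ring A] [Algebra k A]
    (𝒜 : ℕ → Submodule k A) [GradedRing 𝒜]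
    (d : A →ₗ[k] A) (n : ℕ) (ε : A →ₗ[k] k)
    (hgc : GradedComm 𝒜) (hd : IsDifferential 𝒜 d)
    (hconn : ∀ a ∈ 𝒜 0, ∃ r : k, a = r • (1 : A))
    (hft : ∀ i : ℕ, FiniteDimensional k (𝒜 i))
    (hor : IsOrientation 𝒜 d n ε) (hpd : CohomologyPD 𝒜 d n ε)
    (q l : ℕ) (hne : n = 2 * q + 2)
    (α γ : Fin l → A)
    (hαm : ∀ i, α i ∈ 𝒜 (q + 2)) (hαz : ∀ i, d (α i) = 0) (hαo : ∀ i, α i ∈ Orphans ε)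
    (hspan : ∀ a : A, a ∈ Orphans ε → a ∈ 𝒜 (q + 2) → d a = 0 →
      ∃ (b : A) (cf : Fin l → k), b ∈ Orphans ε ∧ b ∈ 𝒜 (q + 1) ∧ a = d b + ∑ i, cf i • α i)
    (hind : ∀ (cf : Fin l → k) (b : A), b ∈ Orphans ε → b ∈ 𝒜 (q + 1) →
      (∑ i, cf i • α i) = d b → ∀ i, cf i = 0)
    (hγm : ∀ i, γ i ∈ 𝒜 (q + 1)) (hγd : ∀ i, d (γ i) = α i)
    (hγperp : ∀ (i : Fin l) (z : A), d z = 0 → ε (γ i * z) = 0) :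
    ∀ g ∈ Submodule.span k (Set.range γ), g ≠ 0 →
      ∃ g' ∈ Submodule.span k (Set.range γ), ε (g * g') ≠ 0 := by
  obtain rfl : α = fun i => d (γ i) := funext fun i => (hγd i).symm
  have := hft q
  refine gamma_pairing_nondegenerate_general hgc hd hor hne
    (Submodule.span_le.2 (Set.range_subset_iff.2 hγm))
    (fun z hz => map_mul_eq_zero_of_mem_span (Set.forall_mem_range.2 fun i => hγperp i z hz))
    (fun x hx hdx => ?_)
    (disjoint_span_range_sup_ker_s12 fun c b hb => hind c b hb.1 hb.2)
  obtain ⟨b, c, hbO, hb, hdb⟩ := hspan (d x) hdx (hd.grade _ x hx) (hd.d_sq x)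
  exact mem_sup_span_range_sup_ker ⟨hbO, hb⟩ hdb

end PDCDGA
end

section
/- If k ≥ n/2 + 2, then each generator c_i lies in the orphan ideal of Â: ⟨c_1,…,c_l⟩ ⊆ Ô^{k-1}. -/
namespace PDCDGA

variable {k : Type} [Field k]

/-! Let `q = k - 2`, so that `c_i` has degree `q + 1` and `w_i` has degree `q`. Every nontrivial
monomial in the `c_i` and `w_i` has degree at least `q`, hence `Â = j(A) + Â^{≥ q}`. By definition
of `ε̂`, the products `c_i · j(a)` are killed by `ε̂`, whereas `c_i · Â^{≥ q}` lives in degrees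
`≥ 2q + 1 > n`, where `ε̂` vanishes. -/

section DegreeGE

variable {R M : Type*} [Semiring R] [AddCommMonoid M] [Module R M] (ℳ : ℕ → Submodule R M)

/-- The part `M^{≥ m}` of an `ℕ`-graded module `M` spanned by the homogeneous elements of degree
at least `m`; for a graded algebra these form the degree filtration by two-sided ideals. -/
def degreeGE (m : ℕ) : Submodule R M :=
  ⨆ i ≥ m, ℳ i

variable {ℳ}

lemma le_degreeGE {m i : ℕ} (hmi : m ≤ i) : ℳ i ≤ degreeGE ℳ m :=
  le_iSup₂_of_le i hmi le_rfl

lemma degreeGE_le_ker {N : Type*} [AddCommMonoid N] [Module R N] {f : M →ₗ[R] N} {n m : ℕ}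
    (hf : ∀ i ≠ n, ∀ x ∈ ℳ i, f x = 0) (hnm : n < m) : degreeGE ℳ m ≤ LinearMap.ker f :=
  iSup₂_le fun i hmi x hx ↦ hf i (hnm.trans_le hmi).ne' x hx

lemma mem_degreeGE_zero [DirectSum.Decomposition ℳ] (x : M) : x ∈ degreeGE ℳ 0 := by
  have hsup : ⨆ i, ℳ i = ⊤ := (DirectSum.Decomposition.isInternal ℳ).submodule_iSup_eq_top
  have hle : ⨆ i, ℳ i ≤ degreeGE ℳ 0 := iSup_le fun i ↦ le_degreeGE i.zero_le
  exact hle (hsup ▸ Submodule.mem_top)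

end DegreeGE

section DegreeGEMul

variable {R B : Type*} [CommSemiring R] [Semiring B] [Algebra R B] {ℬ : ℕ → Submodule R B}

lemma mul_mem_degreeGE [SetLike.GradedMonoid ℬ] {x y : B} {m m' : ℕ}
    (hx : x ∈ degreeGE ℬ m) (hy : y ∈ degreeGE ℬ m') : x * y ∈ degreeGE ℬ (m + m') := by
  suffices hle : degreeGE ℬ m * degreeGE ℬ m' ≤ degreeGE ℬ (m + m') from
    hle (Submodule.mul_mem_mul hx hy)
  rw [degreeGE, degreeGE]
  simp_rw [Submodule.iSup_mul, Submodule.mul_iSup, iSup_le_iff, Submodule.mul_le]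
  intro i hi i' hi' x hx y hy
  exact le_degreeGE (add_le_add hi hi') (SetLike.mul_mem_graded hx hy)

variable [GradedAlgebra ℬ]

lemma mul_mem_degreeGE_left (x : B) {y : B} {m : ℕ} (hy : y ∈ degreeGE ℬ m) :
    x * y ∈ degreeGE ℬ m :=
  zero_add m ▸ mul_mem_degreeGE (mem_degreeGE_zero x) hy

lemma mul_mem_degreeGE_right {x : B} (y : B) {m : ℕ} (hx : x ∈ degreeGE ℬ m) :
    x * y ∈ degreeGE ℬ m :=
  add_zero m ▸ mul_mem_degreeGE hx (mem_degreeGE_zero y)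

lemma pow_mem_degreeGE {x : B} {m s : ℕ} (hx : x ∈ degreeGE ℬ m) (hs : s ≠ 0) :
    x ^ s ∈ degreeGE ℬ m := by
  rw [← mul_pow_sub_one hs]
  exact mul_mem_degreeGE_right _ hx

lemma list_prod_mem_degreeGE {L : List B} {x : B} {m : ℕ} (hxL : x ∈ L)
    (hx : x ∈ degreeGE ℬ m) : L.prod ∈ degreeGE ℬ m := by
  obtain ⟨L₁, L₂, rfl⟩ := List.append_of_mem hxL
  rw [List.prod_append, List.prod_cons]
  exact mul_mem_degreeGE_left _ (mul_mem_degreeGE_right _ hx)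

lemma prod_pow_mem_degreeGE {l m : ℕ} {v : Fin l → B} {s : Fin l → ℕ}
    (hv : ∀ i, v i ∈ degreeGE ℬ m) (hs : s ≠ 0) :
    ((List.finRange l).map fun i ↦ v i ^ s i).prod ∈ degreeGE ℬ m := by
  obtain ⟨i, hi⟩ := Function.ne_iff.1 hs
  exact list_prod_mem_degreeGE (List.mem_map_of_mem (List.mem_finRange i))
    (pow_mem_degreeGE (hv i) hi)

end DegreeGEMul

lemma range_mul_span_eq_top {R A B M : Type*} [CommSemiring R] [AddCommMonoid A] [Module R A]
    [Semiring B] [Algebra R B] (φ : A →ₗ[R] B) {v : M → B} {s : Set B} (hv : ∀ μ, v μ ∈ s)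
    (hsum : ∀ x : B, ∃ f : M →₀ A, (f.sum fun μ a ↦ φ a * v μ) = x) :
    LinearMap.range φ * Submodule.span R s = ⊤ := by
  refine eq_top_iff.2 fun x _ ↦ ?_
  obtain ⟨f, rfl⟩ := hsum x
  exact Submodule.sum_mem _ fun μ _ ↦
    Submodule.mul_mem_mul ⟨f μ, rfl⟩ (Submodule.subset_span (hv μ))

section Monomial

variable {R B : Type} [CommSemiring R] [Semiring B] [Algebra R B] {ℬ : ℕ → Submodule R B}
  [GradedAlgebra ℬ] {l m : ℕ} {c w : Fin l → B}

lemma monomial_mem_degreeGE (hc : ∀ i, c i ∈ degreeGE ℬ m) (hw : ∀ i, w i ∈ degreeGE ℬ m)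
    {μ : (Fin l → ℕ) × (Fin l → ℕ)} (hμ : μ ≠ 0) : monomial c w μ ∈ degreeGE ℬ m := by
  by_cases hμc : μ.1 = 0
  · exact mul_mem_degreeGE_left _ (prod_pow_mem_degreeGE hw fun hμw ↦ hμ (Prod.ext hμc hμw))
  · exact mul_mem_degreeGE_right _ (prod_pow_mem_degreeGE hc hμc)

lemma span_monomial_le (hc : ∀ i, c i ∈ degreeGE ℬ m) (hw : ∀ i, w i ∈ degreeGE ℬ m) :
    Submodule.span R (Set.range (monomial c w)) ≤ 1 ⊔ degreeGE ℬ m := by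
  rw [Submodule.span_le, Set.range_subset_iff]
  intro μ
  rcases eq_or_ne μ 0 with rfl | hμ
  · have monomial_zero : monomial c w 0 = 1 := by simp [monomial]
    exact monomial_zero ▸ Submodule.one_le.1 le_sup_left
  · exact Submodule.mem_sup_right (monomial_mem_degreeGE hc hw hμ)

lemma codisjoint_degreeGE_of_mul_span_monomial {S : Submodule R B}
    (hc : ∀ i, c i ∈ degreeGE ℬ m) (hw : ∀ i, w i ∈ degreeGE ℬ m)
    (hgen : S * Submodule.span R (Set.range (monomial c w)) = ⊤) :
    Codisjoint S (degreeGE ℬ m) := by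
  refine codisjoint_iff_le_sup.2 ?_
  calc
    ⊤ = S * Submodule.span R (Set.range (monomial c w)) := hgen.symm
    _ ≤ S * (1 ⊔ degreeGE ℬ m) := by gcongr; exact span_monomial_le hc hw
    _ = S ⊔ S * degreeGE ℬ m := by rw [Submodule.mul_sup, mul_one]
    _ ≤ S ⊔ degreeGE ℬ m := by
      gcongr
      exact Submodule.mul_le.2 fun x _ y hy ↦ mul_mem_degreeGE_left x hy

end Monomial

section Orphans

variable {B : Type} [Ring B] [Algebra k B] {ℬ : ℕ → Submodule k B} [GradedAlgebra ℬ]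
  {E : B →ₗ[k] k} {S : Submodule k B} {n : ℕ}

lemma mem_orphans_of_codisjoint_degreeGE {x : B} {p m : ℕ}
    (hS : Codisjoint S (degreeGE ℬ m)) (hx : x ∈ degreeGE ℬ p)
    (hxS : ∀ s ∈ S, E (x * s) = 0) (hE : ∀ i ≠ n, ∀ y ∈ ℬ i, E y = 0) (hn : n < p + m) :
    x ∈ Orphans E := by
  refine (mem_orphans E x).2 fun b ↦ ?_
  obtain ⟨s, y, hs, hy, rfl⟩ := Submodule.codisjoint_iff_exists_add_eq.1 hS b
  rw [mul_add, map_add, hxS s hs, zero_add, degreeGE_le_ker hE hn (mul_mem_degreeGE hx hy)]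

theorem c_generators_are_orphans_general {l p q : ℕ} {c w : Fin l → B}
    (hc : ∀ i, c i ∈ ℬ p) (hw : ∀ i, w i ∈ ℬ q)
    (hgen : S * Submodule.span k (Set.range (monomial c w)) = ⊤)
    (hE : ∀ m ≠ n, ∀ x ∈ ℬ m, E x = 0) (hn : n < p + min p q)
    (i : Fin l) (hcS : ∀ s ∈ S, E (c i * s) = 0) : c i ∈ Orphans E := by
  have hcodisjoint : Codisjoint S (degreeGE ℬ (min p q)) :=
    codisjoint_degreeGE_of_mul_span_monomial (fun i ↦ le_degreeGE (min_le_left p q) (hc i))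
      (fun i ↦ le_degreeGE (min_le_right p q) (hw i)) hgen
  exact mem_orphans_of_codisjoint_degreeGE hcodisjoint (le_degreeGE le_rfl (hc i)) hcS hE hn

end Orphans

/-- if `k ≥ n/2 + 2` (with `k = q + 2`), then each generator `c_i`
lies in the orphan ideal of `Â`. -/
theorem c_generators_are_orphans {k A B : Type} [Field k] [Ring A] [Algebra k A] [Ring B] [Algebra k B]
    (𝒜 : ℕ → Submodule k A) [GradedRing 𝒜] (ℬ : ℕ → Submodule k B) [GradedRing ℬ]
    (d : A →ₗ[k] A) (D : B →ₗ[k] B) (n q l : ℕ)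
    (ε : A →ₗ[k] k) (E : B →ₗ[k] k)
    (hgcA : GradedComm 𝒜) (hdA : IsDifferential 𝒜 d)
    (hgcB : GradedComm ℬ) (hdB : IsDifferential ℬ D)
    (hft : ∀ i : ℕ, FiniteDimensional k (𝒜 i))
    (hconn : ∀ a ∈ 𝒜 0, ∃ r : k, a = r • (1 : A))
    (h1 : 𝒜 1 = ⊥) (h2 : ∀ a ∈ 𝒜 2, d a = 0)
    (hn : 7 ≤ n) (hk : n + 2 ≤ 2 * (q + 2))
    (hor : IsOrientation 𝒜 d n ε) (hpd : CohomologyPD 𝒜 d n ε)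
    (α γ : Fin l → A)
    (hαm : ∀ i, α i ∈ 𝒜 (q + 2)) (hαz : ∀ i, d (α i) = 0) (hαo : ∀ i, α i ∈ Orphans ε)
    (hspan : ∀ a : A, a ∈ Orphans ε → a ∈ 𝒜 (q + 2) → d a = 0 →
      ∃ (b : A) (cf : Fin l → k), b ∈ Orphans ε ∧ b ∈ 𝒜 (q + 1) ∧ a = d b + ∑ i, cf i • α i)
    (hind : ∀ (cf : Fin l → k) (b : A), b ∈ Orphans ε → b ∈ 𝒜 (q + 1) →
      (∑ i, cf i • α i) = d b → ∀ i, cf i = 0)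
    (hγm : ∀ i, γ i ∈ 𝒜 (q + 1)) (hγd : ∀ i, d (γ i) = α i)
    (hγperp : ∀ (i : Fin l) (z : A), d z = 0 → ε (γ i * z) = 0)
    (T Z : Submodule k A)
    (hT : IsCompl T (LinearMap.range d)) (hγT : ∀ i, γ i ∈ T)
    (hZo : Z ≤ Orphans ε)
    (hZdisj : Z ⊓ (Orphans ε ⊓ LinearMap.range d) = ⊥)
    (hZsup : Z ⊔ (Orphans ε ⊓ LinearMap.range d) = Orphans ε)
    (hZT : Z ≤ T)
    (hZgr : ∀ z ∈ Z, ∀ i : ℕ, ((DirectSum.decompose 𝒜 z i : 𝒜 i) : A) ∈ Z)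
    (j : A →ₐ[k] B) (hjgr : ∀ i : ℕ, ∀ a ∈ 𝒜 i, j a ∈ ℬ i)
    (hjch : ∀ a : A, D (j a) = j (d a))
    (c w : Fin l → B) (hcm : ∀ i, c i ∈ ℬ (q + 1)) (hwm : ∀ i, w i ∈ ℬ q)
    (hDc : ∀ i, D (c i) = j (α i)) (hDw : ∀ i, D (w i) = c i - j (γ i))
    (hcase : CharZero k ∨ Odd (q + 2))
    (hfree : ∀ x : B, ∃! f : MonIdx q l →₀ A,
      (f.sum fun μ a => j a * monomial c w μ.1) = x)
    (hEj : ∀ a : A, E (j a) = ε a)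
    (hEwd : ∀ (i : Fin l) (ξ : A), E (w i * j (d ξ)) = ((-1 : k) ^ (q + 2)) * ε (γ i * ξ))
    (hEcc : ∀ i i' : Fin l, E (c i * c i') = - ε (γ i * γ i'))
    (hEw : ∀ i : Fin l, E (w i) = 0)
    (hEwT : ∀ (i : Fin l) (t : A), t ∈ T → E (w i * j t) = 0)
    (hEc : ∀ i : Fin l, E (c i) = 0)
    (hEcj : ∀ (i : Fin l) (ξ : A), E (c i * j ξ) = 0)
    (hEccj : ∀ (i i' : Fin l) (ξ : A), E (c i * c i' * j ξ) = 0)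
    (hEcw : ∀ i i' : Fin l, E (c i * w i') = 0)
    (hEcwj : ∀ (i i' : Fin l) (ξ : A), E (c i * w i' * j ξ) = 0)
    (hEww : ∀ i i' : Fin l, E (w i * w i') = 0)
    (hEwwj : ∀ (i i' : Fin l) (ξ : A), E (w i * w i' * j ξ) = 0)
    (hEhom : ∀ m : ℕ, m ≠ n → ∀ x ∈ ℬ m, E x = 0)
    (hk2 : n + 4 ≤ 2 * (q + 2)) :
    ∀ i : Fin l, c i ∈ Orphans E := by
  intro i
  have hgen := range_mul_span_eq_top j.toLinearMap
    (fun μ : MonIdx q l ↦ Set.mem_range_self μ.1) fun x ↦ (hfree x).exists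
  exact c_generators_are_orphans_general hcm hwm hgen hEhom (by omega) i
    (by rintro _ ⟨a, rfl⟩; exact hEcj i a)

end PDCDGA
end
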